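/- arXiv:math/0505399 — 3 statements merged into one kernel-verified Lean document; each statement's English description precedes it below -/
import Mathlib

section
/- Let φ : (0,∞) → ℂ be smooth and compactly supported in (0,∞), and let φ*(s) := ∫₀^∞ φ(y) y^{s−1} dy be its Mellin transform. Then for every a > 0, every t ∈ ℝ, every δ ∈ {−1, 1}, and every σ with 0 < σ < 1/2, the integral on the right-hand side converges absolutely and ∫₀^∞ φ(y) y^{−1−it} exp( −δ i a y^{−1/2} ) dy = (1/(π i)) ∫_{Re s = σ} φ*(s) Γ(2(s+it)) exp( −δ π i (s+it) ) a^{−2(s+it)} ds. -/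
open MeasureTheory Real

/-- The kernel of the Mellin–Barnes representation (4.25) of Jutila–Motohashi:
`φ*(s) Γ(2(s+it)) exp(−δπi(s+it)) a^{−2(s+it)}`. -/
noncomputable def mbKernel (φ : ℝ → ℂ) (a t δ : ℝ) (s : ℂ) : ℂ :=
  mellin φ s * Complex.Gamma (2 * (s + Complex.I * t)) *
    Complex.exp (-(δ : ℂ) * (π : ℂ) * Complex.I * (s + Complex.I * t)) *
    ((a : ℂ)) ^ (-2 * (s + Complex.I * t))

/-!
For `0 < r.re` the Mellin transform of `y ↦ exp (-(r * y ^ p))` is a power of `r` times a value of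
`Γ`, so Mellin inversion of `φ` and Fubini turn `mellin (fun y => φ y * exp (-(r * y ^ p))) c`
into a Mellin–Barnes integral. The oscillatory integral is the boundary case `r = δ i a`,
`p = -1/2`, `c = -i t`, where the Mellin integral of `exp (-(r * y ^ p))` no longer converges
absolutely. Bounding the rotated Laplace integral for `Γ w` trivially gives
`Γ w ≪ (1 + |im w|) ^ re w * exp (-π |im w| / 2)`, and the exponential cancels the growth of
`r ^ (-w)` on the closed half-plane; the rapid decay of `mellin φ` absorbs the remaining power.
Both sides are therefore continuous in `r` up to the boundary, away from `0`, and the identity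
persists there.
-/

section LaplaceTransformOfPower

variable {w r : ℂ}

theorem norm_cpow_mul_exp_neg_mul {x : ℝ} (hx : 0 < x) (w r : ℂ) :
    ‖(x : ℂ) ^ w * Complex.exp (-(r * x))‖ = x ^ w.re * Real.exp (-(r.re * x)) := by
  rw [norm_mul, Complex.norm_cpow_eq_rpow_re_of_pos hx, Complex.norm_exp, Complex.neg_re,
    Complex.re_mul_ofReal]

theorem integrableOn_rpow_mul_exp_neg_mul_Ioi {s b : ℝ} (hs : -1 < s) (hb : 0 < b) :
    IntegrableOn (fun x : ℝ => x ^ s * Real.exp (-(b * x))) (Set.Ioi 0) := by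
  simpa only [Real.rpow_one, neg_mul] using
    integrableOn_rpow_mul_exp_neg_mul_rpow (p := 1) hs one_pos hb

theorem mellinConvergent_exp_neg_mul (hw : 0 < w.re) (hr : 0 < r.re) :
    MellinConvergent (fun x : ℝ => Complex.exp (-(r * x))) w := by
  have hw' : -1 < (w - 1).re := by simpa using hw
  refine (integrableOn_rpow_mul_exp_neg_mul_Ioi hw' hr).mono'
    (Measurable.aestronglyMeasurable (by fun_prop)) ?_
  filter_upwards [ae_restrict_mem measurableSet_Ioi] with x hx
  exact (norm_cpow_mul_exp_neg_mul hx _ _).le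

theorem differentiableAt_mellin_exp_neg_mul (hw : 0 < w.re) (hr : 0 < r.re) :
    DifferentiableAt ℂ (fun r : ℂ => mellin (fun x : ℝ => Complex.exp (-(r * x))) w) r := by
  have hball : ∀ z ∈ Metric.ball r (r.re / 2), r.re / 2 < z.re := by
    intro z hz
    have hlt := (Complex.abs_re_le_norm (z - r)).trans_lt (mem_ball_iff_norm.1 hz)
    rw [Complex.sub_re, abs_lt] at hlt
    linarith [hlt.1]
  refine (hasDerivAt_integral_of_dominated_loc_of_deriv_le
    (F' := fun z x => (x : ℂ) ^ (w - 1) * (Complex.exp (-(z * x)) * -x))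
    (bound := fun x => x ^ w.re * Real.exp (-(r.re / 2 * x)))
    (Metric.ball_mem_nhds r (half_pos hr)) ?_ ?_ ?_ ?_ ?_ ?_).2.differentiableAt
  · exact Filter.Eventually.of_forall fun z => Measurable.aestronglyMeasurable (by fun_prop)
  · exact mellinConvergent_exp_neg_mul hw hr
  · exact Measurable.aestronglyMeasurable (by fun_prop)
  · filter_upwards [ae_restrict_mem measurableSet_Ioi] with x (hx : 0 < x) z hz
    calc ‖(x : ℂ) ^ (w - 1) * (Complex.exp (-(z * x)) * -x)‖
        = x ^ w.re * Real.exp (-(z.re * x)) := by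
          rw [← mul_assoc, norm_mul, norm_cpow_mul_exp_neg_mul hx, norm_neg, Complex.norm_real,
            Real.norm_of_nonneg hx.le, mul_right_comm, Complex.sub_re, Complex.one_re,
            ← Real.rpow_add_one hx.ne', sub_add_cancel]
      _ ≤ x ^ w.re * Real.exp (-(r.re / 2 * x)) := by
          gcongr
          exact (hball z hz).le
  · exact integrableOn_rpow_mul_exp_neg_mul_Ioi (by linarith) (half_pos hr)
  · filter_upwards with x z _
    have hlin : HasDerivAt (fun z : ℂ => -(z * x)) (-x : ℂ) z := (hasDerivAt_mul_const (x : ℂ)).neg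
    exact hlin.cexp.const_mul _

theorem mellin_exp_neg_ofReal_mul (hw : 0 < w.re) {b : ℝ} (hb : 0 < b) :
    mellin (fun x : ℝ => Complex.exp (-((b : ℂ) * x))) w = (b : ℂ) ^ (-w) * Complex.Gamma w := by
  have harg : (b : ℂ).arg ≠ π := by
    rw [Complex.arg_ofReal_of_nonneg hb.le]
    exact pi_pos.ne
  simp only [mellin, smul_eq_mul]
  rw [Complex.integral_cpow_mul_exp_neg_mul_Ioi hw hb, one_div, Complex.inv_cpow _ _ harg,
    Complex.cpow_neg]

/-- Both sides are holomorphic in `r`, so the identity extends from the positive real axis. -/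
theorem mellin_exp_neg_mul (hw : 0 < w.re) (hr : 0 < r.re) :
    mellin (fun x : ℝ => Complex.exp (-(r * x))) w = r ^ (-w) * Complex.Gamma w := by
  have hopen : IsOpen {z : ℂ | 0 < z.re} := isOpen_lt continuous_const Complex.continuous_re
  have hleft : AnalyticOnNhd ℂ
      (fun r : ℂ => mellin (fun x : ℝ => Complex.exp (-(r * x))) w) {z : ℂ | 0 < z.re} :=
    DifferentiableOn.analyticOnNhd (fun z hz =>
      (differentiableAt_mellin_exp_neg_mul hw hz).differentiableWithinAt) hopen
  have hright : AnalyticOnNhd ℂ (fun r : ℂ => r ^ (-w) * Complex.Gamma w) {z : ℂ | 0 < z.re} :=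
    DifferentiableOn.analyticOnNhd (fun z hz =>
      ((differentiableAt_id.cpow_const (Or.inl hz)).mul_const _).differentiableWithinAt) hopen
  have hreal : Filter.Tendsto (fun b : ℝ => (b : ℂ)) (nhdsWithin 1 {1}ᶜ) (nhdsWithin 1 {1}ᶜ) :=
    Complex.continuous_ofReal.continuousWithinAt.tendsto_nhdsWithin fun b hb => by simpa using hb
  refine hleft.eqOn_of_preconnected_of_frequently_eq hright
    (convex_halfSpace_re_gt 0).isPreconnected (z₀ := 1) (by simp)
    (hreal.frequently (Filter.Eventually.frequently ?_)) hr
  filter_upwards [nhdsWithin_le_nhds (Ioi_mem_nhds one_pos)] with b hb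
  exact mellin_exp_neg_ofReal_mul hw hb

theorem hasMellin_exp_neg_mul_rpow {p : ℝ} (hp : p ≠ 0) (hw : 0 < (w / p).re) (hr : 0 < r.re) :
    HasMellin (fun y : ℝ => Complex.exp (-(r * (y ^ p : ℝ)))) w
      (|p|⁻¹ * (r ^ (-(w / p)) * Complex.Gamma (w / p))) := by
  refine ⟨(MellinConvergent.comp_rpow (f := fun x : ℝ => Complex.exp (-(r * x))) hp).2
    (mellinConvergent_exp_neg_mul hw hr), ?_⟩
  rw [mellin_comp_rpow (fun x : ℝ => Complex.exp (-(r * x))), mellin_exp_neg_mul hw hr,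
    Complex.real_smul, Complex.ofReal_inv]

end LaplaceTransformOfPower

section GammaBound

variable {w r : ℂ}

theorem norm_cpow_neg (hr : r ≠ 0) (w : ℂ) :
    ‖r ^ (-w)‖ = ‖r‖ ^ (-w.re) * Real.exp (r.arg * w.im) := by
  rw [Complex.norm_cpow_of_ne_zero hr, Complex.neg_re, Complex.neg_im, mul_neg, Real.exp_neg,
    div_inv_eq_mul]

/-- For `r` off the real axis, `‖r ^ (-w)‖` grows exponentially in `w.im` on one side, so this is
an exponential decay estimate for `Γ`. -/
theorem norm_cpow_neg_mul_Gamma_le_of_re_pos (hw : 0 < w.re) (hr : 0 < r.re) :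
    ‖r ^ (-w) * Complex.Gamma w‖ ≤ r.re ^ (-w.re) * Real.Gamma w.re := by
  have hGamma : ∫ x in Set.Ioi (0 : ℝ), x ^ (w.re - 1) * Real.exp (-(r.re * x)) =
      r.re ^ (-w.re) * Real.Gamma w.re := by
    rw [Real.integral_rpow_mul_exp_neg_mul_Ioi hw hr, one_div, Real.inv_rpow hr.le,
      Real.rpow_neg hr.le]
  rw [← mellin_exp_neg_mul hw hr, ← hGamma]
  refine (norm_integral_le_integral_norm _).trans_eq
    (setIntegral_congr_fun measurableSet_Ioi fun x hx => ?_)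
  simp only [smul_eq_mul, norm_cpow_mul_exp_neg_mul hx, Complex.sub_re, Complex.one_re]

theorem norm_Gamma_mul_exp_mul_im_le (hw : 0 < w.re) {θ : ℝ}
    (hθ : θ ∈ Set.Ioo (-(π / 2)) (π / 2)) :
    ‖Complex.Gamma w‖ * Real.exp (θ * w.im) ≤ Real.cos θ ^ (-w.re) * Real.Gamma w.re := by
  have harg : (Complex.exp (θ * Complex.I)).arg = θ := by
    rw [Complex.exp_mul_I, Complex.arg_cos_add_sin_mul_I]
    constructor <;> linarith [hθ.1, hθ.2, Real.pi_pos]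
  have hre : (Complex.exp (θ * Complex.I)).re = Real.cos θ := Complex.exp_ofReal_mul_I_re θ
  have hle := norm_cpow_neg_mul_Gamma_le_of_re_pos hw (hre ▸ Real.cos_pos_of_mem_Ioo hθ)
  rwa [norm_mul, norm_cpow_neg (Complex.exp_ne_zero _), Complex.norm_exp_ofReal_mul_I,
    Real.one_rpow, one_mul, harg, hre, mul_comm] at hle

theorem norm_Gamma_mul_exp_mul_abs_im_le (hw : 0 < w.re) {θ : ℝ}
    (hθ : θ ∈ Set.Ioo (-(π / 2)) (π / 2)) :
    ‖Complex.Gamma w‖ * Real.exp (θ * |w.im|) ≤ Real.cos θ ^ (-w.re) * Real.Gamma w.re := by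
  rcases abs_cases w.im with ⟨him, -⟩ | ⟨him, -⟩
  · rw [him]
    exact norm_Gamma_mul_exp_mul_im_le hw hθ
  · rw [him, mul_neg, ← neg_mul, ← Real.cos_neg]
    exact norm_Gamma_mul_exp_mul_im_le hw ⟨neg_lt_neg hθ.2, by linarith [hθ.1]⟩

/-- A weak form of Stirling's bound: at the angle `π / 2 - (1 + |w.im|)⁻¹` the exponential loses
only a factor `exp 1`, and the cosine only a power of `1 + |w.im|`. -/
theorem norm_Gamma_mul_exp_pi_div_two_le (hw : 0 < w.re) :
    ‖Complex.Gamma w‖ * Real.exp (π / 2 * |w.im|) ≤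
      Real.exp 1 * (π / 2 * (1 + |w.im|)) ^ w.re * Real.Gamma w.re := by
  set T := 1 + |w.im| with hT
  have hT0 : 0 < T := by positivity
  have hTinv0 : 0 < T⁻¹ := inv_pos.2 hT0
  have hTinv1 : T⁻¹ ≤ 1 := inv_le_one_of_one_le₀ (by simp [hT])
  have hpi := Real.pi_gt_three
  have hθ : π / 2 - T⁻¹ ∈ Set.Ioo (-(π / 2)) (π / 2) := ⟨by linarith, by linarith⟩
  have hcos : (π / 2 * T)⁻¹ ≤ Real.cos (π / 2 - T⁻¹) := by
    rw [Real.cos_pi_div_two_sub, mul_inv, inv_div]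
    exact Real.mul_le_sin hTinv0.le (by linarith)
  have hcospow : Real.cos (π / 2 - T⁻¹) ^ (-w.re) ≤ (π / 2 * T) ^ w.re := by
    rw [← inv_inv (π / 2 * T), Real.inv_rpow (by positivity), ← Real.rpow_neg (by positivity)]
    exact Real.rpow_le_rpow_of_nonpos (by positivity) hcos (neg_nonpos.2 hw.le)
  have hexp : Real.exp (π / 2 * |w.im|) ≤ Real.exp 1 * Real.exp ((π / 2 - T⁻¹) * |w.im|) := by
    have hle : T⁻¹ * |w.im| ≤ 1 := by
      rw [inv_mul_le_iff₀ hT0, mul_one, hT]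
      linarith
    rw [← Real.exp_add, Real.exp_le_exp]
    linarith
  calc ‖Complex.Gamma w‖ * Real.exp (π / 2 * |w.im|)
      ≤ Real.exp 1 * (‖Complex.Gamma w‖ * Real.exp ((π / 2 - T⁻¹) * |w.im|)) := by
        rw [mul_left_comm]
        gcongr
    _ ≤ Real.exp 1 * (Real.cos (π / 2 - T⁻¹) ^ (-w.re) * Real.Gamma w.re) := by
        gcongr ?_ * ?_
        exact norm_Gamma_mul_exp_mul_abs_im_le hw hθ
    _ ≤ Real.exp 1 * (π / 2 * T) ^ w.re * Real.Gamma w.re := by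
        rw [← mul_assoc]
        gcongr

theorem norm_cpow_neg_mul_Gamma_le (hw : 0 < w.re) (hr : 0 ≤ r.re) (hr0 : r ≠ 0) :
    ‖r ^ (-w) * Complex.Gamma w‖ ≤
      Real.exp 1 * ‖r‖ ^ (-w.re) * (π / 2 * (1 + |w.im|)) ^ w.re * Real.Gamma w.re := by
  have hexp : Real.exp (r.arg * w.im) ≤ Real.exp (π / 2 * |w.im|) := by
    rw [Real.exp_le_exp]
    calc r.arg * w.im ≤ |r.arg| * |w.im| := (le_abs_self _).trans_eq (abs_mul _ _)
      _ ≤ π / 2 * |w.im| := by gcongr; exact Complex.abs_arg_le_pi_div_two_iff.2 hr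
  calc ‖r ^ (-w) * Complex.Gamma w‖
      = ‖r‖ ^ (-w.re) * (‖Complex.Gamma w‖ * Real.exp (r.arg * w.im)) := by
        rw [norm_mul, norm_cpow_neg hr0]
        ring
    _ ≤ ‖r‖ ^ (-w.re) * (‖Complex.Gamma w‖ * Real.exp (π / 2 * |w.im|)) := by gcongr
    _ ≤ ‖r‖ ^ (-w.re) *
        (Real.exp 1 * (π / 2 * (1 + |w.im|)) ^ w.re * Real.Gamma w.re) := by
        gcongr ?_ * ?_
        exact norm_Gamma_mul_exp_pi_div_two_le hw
    _ = _ := by ring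

end GammaBound

section MellinParseval

variable {E : Type*} [NormedAddCommGroup E] [NormedSpace ℂ E]

theorem mellinConvergent_of_re_eq {f : ℝ → E} {s s' : ℂ} (hf : MellinConvergent f s)
    (h : s'.re = s.re) : MellinConvergent f s' := by
  have hnorm : ∀ᵐ y : ℝ ∂volume.restrict (Set.Ioi 0), ‖(y : ℂ) ^ (s' - s)‖ ≤ 1 := by
    filter_upwards [ae_restrict_mem measurableSet_Ioi] with y hy
    simp only [Complex.norm_cpow_eq_rpow_re_of_pos hy, Complex.sub_re, h, sub_self, Real.rpow_zero,
      le_refl]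
  refine (Integrable.bdd_smul hf 1 (Measurable.aestronglyMeasurable (by fun_prop)) hnorm).congr ?_
  filter_upwards [ae_restrict_mem measurableSet_Ioi] with y hy
  rw [Pi.smul_apply', smul_smul, ← Complex.cpow_add _ _ (Complex.ofReal_ne_zero.2 hy.ne')]
  congr 2
  ring

theorem continuous_mellin_vertical {f : ℝ → E} {σ : ℝ} (hf : MellinConvergent f σ) :
    Continuous fun u : ℝ => mellin f (σ + u * Complex.I) := by
  refine continuous_of_dominated
    (fun u => (mellinConvergent_of_re_eq hf (by simp)).aestronglyMeasurable)
    (bound := fun y => ‖(y : ℂ) ^ ((σ : ℂ) - 1) • f y‖) (fun u => ?_) hf.norm ?_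
  · filter_upwards [ae_restrict_mem measurableSet_Ioi] with y hy
    simp [norm_smul, Complex.norm_cpow_eq_rpow_re_of_pos hy]
  · filter_upwards [ae_restrict_mem measurableSet_Ioi] with y hy
    have hy0 : (y : ℂ) ≠ 0 := Complex.ofReal_ne_zero.2 hy.ne'
    exact (Continuous.const_cpow (by fun_prop) (Or.inl hy0)).smul continuous_const

variable {f g : ℝ → ℂ} {σ : ℝ} {c : ℂ}

theorem integrable_mellin_mul_cpow_mul (hf : Complex.VerticalIntegrable (mellin f) σ)
    (hg : MellinConvergent g (c - σ)) :
    Integrable (Function.uncurry fun (y u : ℝ) =>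
        mellin f (σ + u * Complex.I) * ((y : ℂ) ^ (c - (σ + u * Complex.I) - 1) * g y))
      ((volume.restrict (Set.Ioi 0)).prod volume) := by
  have hpos : ∀ᵐ p ∂(volume.restrict (Set.Ioi (0 : ℝ))).prod (volume : Measure ℝ),
      0 < p.1 := Measure.quasiMeasurePreserving_fst.ae (ae_restrict_mem measurableSet_Ioi)
  have hnorm : ∀ᵐ p ∂(volume.restrict (Set.Ioi (0 : ℝ))).prod (volume : Measure ℝ),
      ‖(p.1 : ℂ) ^ (-(p.2 * Complex.I))‖ ≤ 1 := by
    filter_upwards [hpos] with p hp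
    simp [Complex.norm_cpow_eq_rpow_re_of_pos hp]
  refine ((Integrable.mul_prod hg hf).bdd_mul (c := 1)
    (Measurable.aestronglyMeasurable (by fun_prop)) hnorm).congr ?_
  filter_upwards [hpos] with p hp
  have hexp : c - (σ + p.2 * Complex.I) - 1 = -(p.2 * Complex.I) + (c - σ - 1) := by ring
  simp only [Function.uncurry, hexp, Complex.cpow_add _ _ (Complex.ofReal_ne_zero.2 hp.ne'),
    smul_eq_mul]
  ring

theorem mellin_mul_eq_integral_mellin_mul_mellin (hf : ContinuousOn f (Set.Ioi 0))
    (hfσ : MellinConvergent f σ) (hfint : Complex.VerticalIntegrable (mellin f) σ)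
    (hg : MellinConvergent g (c - σ)) :
    mellin (fun y => f y * g y) c = (2 * π)⁻¹ *
      ∫ u : ℝ, mellin f (σ + u * Complex.I) * mellin g (c - (σ + u * Complex.I)) := by
  have hinv : ∀ y ∈ Set.Ioi (0 : ℝ), (y : ℂ) ^ (c - 1) • (f y * g y) = (2 * π)⁻¹ *
      ∫ u : ℝ, mellin f (σ + u * Complex.I) *
        ((y : ℂ) ^ (c - (σ + u * Complex.I) - 1) * g y) := by
    intro y hy
    have hy0 : (y : ℂ) ≠ 0 := Complex.ofReal_ne_zero.2 (ne_of_gt hy)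
    rw [← mellinInv_mellin_eq σ f hy hfσ hfint (hf.continuousAt (Ioi_mem_nhds hy)), mellinInv,
      Complex.real_smul, mul_assoc, smul_eq_mul, mul_left_comm, ← integral_mul_const,
      ← integral_const_mul]
    push_cast
    rw [one_div]
    congr 2 with u
    have hexp : c - (σ + u * Complex.I) - 1 = c - 1 + -(σ + u * Complex.I) := by ring
    rw [hexp, Complex.cpow_add _ _ hy0, smul_eq_mul]
    ring
  rw [mellin, setIntegral_congr_fun measurableSet_Ioi hinv, integral_const_mul,
    integral_integral_swap (integrable_mellin_mul_cpow_mul hfint hg)]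
  simp only [integral_const_mul, mellin, smul_eq_mul]

end MellinParseval

section MellinBarnesIntegral

/-- The integrand of the Mellin–Barnes representation of
`mellin (fun y => φ y * exp (-(r * y ^ p))) c`: the Mellin transform of `φ` at `s` times `|p|` times
that of `y ↦ exp (-(r * y ^ p))` at `c - s`, which is given by its closed form so as to make sense
on the boundary of the half-plane `0 < r.re` too. -/
noncomputable def expPowKernel (φ : ℝ → ℂ) (p : ℝ) (c r s : ℂ) : ℂ :=
  mellin φ s * (r ^ (-((c - s) / p)) * Complex.Gamma ((c - s) / p))

variable {φ : ℝ → ℂ} {p σ : ℝ} {c r : ℂ}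

theorem re_sub_vertical_div (c : ℂ) (p σ u : ℝ) :
    ((c - (σ + u * Complex.I)) / p).re = (c.re - σ) / p := by
  simp [Complex.div_ofReal_re]

theorem one_add_abs_im_sub_vertical_div_le (c : ℂ) (p σ u : ℝ) :
    1 + |((c - (σ + u * Complex.I)) / p).im| ≤ (1 + (1 + |c.im|) / |p|) * (1 + |u|) := by
  have him : ((c - (σ + u * Complex.I)) / p).im = (c.im - u) / p := by
    simp [Complex.div_ofReal_im]
  have hsub : |c.im - u| ≤ (1 + |c.im|) * (1 + |u|) := by
    nlinarith [abs_sub c.im u, abs_nonneg c.im, abs_nonneg u]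
  calc 1 + |((c - (σ + u * Complex.I)) / p).im|
      = 1 + |c.im - u| / |p| := by rw [him, abs_div]
    _ ≤ 1 + (1 + |c.im|) * (1 + |u|) / |p| := by gcongr
    _ ≤ (1 + |u|) + (1 + |c.im|) * (1 + |u|) / |p| := by gcongr; simp
    _ = _ := by ring

theorem continuousAt_Gamma_of_re_pos {w : ℂ} (hw : 0 < w.re) : ContinuousAt Complex.Gamma w := by
  refine Complex.continuousAt_Gamma w fun m hm => hw.not_ge ?_
  simp [hm]

theorem continuous_expPowKernel (hφσ : MellinConvergent φ σ) (hσ : 0 < (c.re - σ) / p)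
    (hr0 : r ≠ 0) : Continuous fun u : ℝ => expPowKernel φ p c r (σ + u * Complex.I) := by
  have hΓ : Continuous fun u : ℝ => Complex.Gamma ((c - (σ + u * Complex.I)) / p) := by
    refine continuous_iff_continuousAt.2 fun u => ContinuousAt.comp (g := Complex.Gamma)
      (continuousAt_Gamma_of_re_pos ?_) (by fun_prop)
    rwa [re_sub_vertical_div]
  exact (continuous_mellin_vertical hφσ).mul
    ((Continuous.const_cpow (by fun_prop) (Or.inl hr0)).mul hΓ)

theorem exists_norm_expPowKernel_le (φ : ℝ → ℂ) (hσ : 0 < (c.re - σ) / p) {ρ : ℝ} (hρ : 0 < ρ) :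
    ∃ C : ℝ, ∀ r : ℂ, 0 ≤ r.re → ρ ≤ ‖r‖ → ∀ u : ℝ,
      ‖expPowKernel φ p c r (σ + u * Complex.I)‖ ≤
        C * ((1 + |u|) ^ ((c.re - σ) / p) * ‖mellin φ (σ + u * Complex.I)‖) := by
  set κ := (c.re - σ) / p
  refine ⟨Real.exp 1 * ρ ^ (-κ) * (π / 2 * (1 + (1 + |c.im|) / |p|)) ^ κ * Real.Gamma κ,
    fun r hr hρr u => ?_⟩
  have hw : ((c - (σ + u * Complex.I)) / p).re = κ := re_sub_vertical_div c p σ u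
  have hr0 : r ≠ 0 := norm_pos_iff.1 (hρ.trans_le hρr)
  have hle := norm_cpow_neg_mul_Gamma_le (hw ▸ hσ) hr hr0
  rw [hw] at hle
  have hrpow : ‖r‖ ^ (-κ) ≤ ρ ^ (-κ) := Real.rpow_le_rpow_of_nonpos hρ hρr (neg_nonpos.2 hσ.le)
  have him : (π / 2 * (1 + |((c - (σ + u * Complex.I)) / p).im|)) ^ κ ≤
      (π / 2 * (1 + (1 + |c.im|) / |p|)) ^ κ * (1 + |u|) ^ κ := by
    rw [← Real.mul_rpow (by positivity) (by positivity), mul_assoc]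
    gcongr
    exact one_add_abs_im_sub_vertical_div_le c p σ u
  calc ‖expPowKernel φ p c r (σ + u * Complex.I)‖
      ≤ ‖mellin φ (σ + u * Complex.I)‖ * (Real.exp 1 * ‖r‖ ^ (-κ) *
          (π / 2 * (1 + |((c - (σ + u * Complex.I)) / p).im|)) ^ κ * Real.Gamma κ) := by
        rw [expPowKernel, norm_mul]
        gcongr
    _ ≤ ‖mellin φ (σ + u * Complex.I)‖ * (Real.exp 1 * ρ ^ (-κ) *
          ((π / 2 * (1 + (1 + |c.im|) / |p|)) ^ κ * (1 + |u|) ^ κ) * Real.Gamma κ) := by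
        gcongr
    _ = _ := by ring

theorem integrable_expPowKernel (hφσ : MellinConvergent φ σ)
    (hφint : Integrable fun u : ℝ =>
      (1 + |u|) ^ ((c.re - σ) / p) * ‖mellin φ (σ + u * Complex.I)‖)
    (hσ : 0 < (c.re - σ) / p) (hr : 0 ≤ r.re) (hr0 : r ≠ 0) :
    Integrable fun u : ℝ => expPowKernel φ p c r (σ + u * Complex.I) := by
  obtain ⟨C, hC⟩ := exists_norm_expPowKernel_le φ hσ (norm_pos_iff.2 hr0)
  exact (hφint.const_mul C).mono' (continuous_expPowKernel hφσ hσ hr0).aestronglyMeasurable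
    (.of_forall (hC r hr le_rfl))

theorem mem_slitPlane_of_re_nonneg (hr : 0 ≤ r.re) (hr0 : r ≠ 0) : r ∈ Complex.slitPlane := by
  rw [Complex.mem_slitPlane_iff_arg]
  exact ⟨fun h => by linarith [Complex.abs_arg_le_pi_div_two_iff.2 hr, le_abs_self r.arg, pi_pos],
    hr0⟩

theorem continuousOn_integral_expPowKernel (hφσ : MellinConvergent φ σ)
    (hφint : Integrable fun u : ℝ =>
      (1 + |u|) ^ ((c.re - σ) / p) * ‖mellin φ (σ + u * Complex.I)‖)
    (hσ : 0 < (c.re - σ) / p) :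
    ContinuousOn (fun r : ℂ => ∫ u : ℝ, expPowKernel φ p c r (σ + u * Complex.I))
      ({r | 0 ≤ r.re} \ {0}) := by
  rintro r₀ ⟨hr₀, hr₀0 : r₀ ≠ 0⟩
  have hρ : 0 < ‖r₀‖ / 2 := half_pos (norm_pos_iff.2 hr₀0)
  have hnear : ∀ᶠ r in nhdsWithin r₀ ({r | 0 ≤ r.re} \ {0}), ‖r₀‖ / 2 ≤ ‖r‖ :=
    ((continuous_norm.tendsto r₀).eventually
      (Ici_mem_nhds (half_lt_self (norm_pos_iff.2 hr₀0)))).filter_mono nhdsWithin_le_nhds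
  obtain ⟨C, hC⟩ := exists_norm_expPowKernel_le φ hσ hρ
  refine continuousWithinAt_of_dominated ?_ ?_ (hφint.const_mul C) ?_
  · filter_upwards [self_mem_nhdsWithin] with r hr
    exact (continuous_expPowKernel hφσ hσ hr.2).aestronglyMeasurable
  · filter_upwards [self_mem_nhdsWithin, hnear] with r hr hρr
    exact .of_forall (hC r hr.1 hρr)
  · refine .of_forall fun u => ContinuousAt.continuousWithinAt ?_
    exact ((continuousAt_cpow_const (mem_slitPlane_of_re_nonneg hr₀ hr₀0)).mul
      continuousAt_const).const_mul _

theorem continuousOn_mellin_mul_exp_neg_mul_rpow (hφ : ContinuousOn φ (Set.Ioi 0))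
    (hφc : MellinConvergent φ c) (p : ℝ) :
    ContinuousOn (fun r : ℂ => mellin (fun y => φ y * Complex.exp (-(r * (y ^ p : ℝ)))) c)
      {r | 0 ≤ r.re} := by
  intro r₀ _
  have hmeas : AEStronglyMeasurable φ (volume.restrict (Set.Ioi 0)) :=
    hφ.aestronglyMeasurable measurableSet_Ioi
  refine continuousWithinAt_of_dominated (.of_forall fun r => ?_) ?_ hφc.norm
    (.of_forall fun y => ?_)
  · have hcpow : Measurable fun y : ℝ => (y : ℂ) ^ (c - 1) := by fun_prop
    have hexp : Measurable fun y : ℝ => Complex.exp (-(r * (y ^ p : ℝ))) := by fun_prop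
    exact hcpow.aestronglyMeasurable.smul (hmeas.mul hexp.aestronglyMeasurable)
  · filter_upwards [self_mem_nhdsWithin] with r hr
    filter_upwards [ae_restrict_mem measurableSet_Ioi] with y (hy : 0 < y)
    have hexp : ‖Complex.exp (-(r * (y ^ p : ℝ)))‖ ≤ 1 := by
      rw [Complex.norm_exp, Real.exp_le_one_iff, Complex.neg_re, Complex.re_mul_ofReal,
        neg_nonpos]
      exact mul_nonneg hr (by positivity)
    simp only [norm_smul, norm_mul]
    gcongr
    exact mul_le_of_le_one_right (norm_nonneg _) hexp
  · exact Continuous.continuousWithinAt (by fun_prop)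

theorem mellin_mul_exp_neg_mul_rpow_of_re_pos (hφ : ContinuousOn φ (Set.Ioi 0))
    (hφσ : MellinConvergent φ σ) (hφint : Complex.VerticalIntegrable (mellin φ) σ)
    (hσ : 0 < (c.re - σ) / p) (hr : 0 < r.re) :
    mellin (fun y => φ y * Complex.exp (-(r * (y ^ p : ℝ)))) c =
      (2 * π * |p|)⁻¹ * ∫ u : ℝ, expPowKernel φ p c r (σ + u * Complex.I) := by
  have hp : p ≠ 0 := by
    rintro rfl
    simp at hσ
  have hmellin (u : ℝ) : HasMellin (fun y : ℝ => Complex.exp (-(r * (y ^ p : ℝ))))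
      (c - (σ + u * Complex.I)) _ := hasMellin_exp_neg_mul_rpow hp (by rwa [re_sub_vertical_div]) hr
  rw [mellin_mul_eq_integral_mellin_mul_mellin hφ hφσ hφint (by simpa using (hmellin 0).1),
    mul_inv (2 * π), Complex.ofReal_mul, mul_assoc]
  congr 1
  rw [← integral_const_mul]
  congr 1 with u
  rw [(hmellin u).2, expPowKernel, Complex.ofReal_inv, mul_left_comm]

theorem mellin_mul_exp_neg_mul_rpow (hφ : ContinuousOn φ (Set.Ioi 0))
    (hφc : MellinConvergent φ c) (hφσ : MellinConvergent φ σ)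
    (hφint : Integrable fun u : ℝ =>
      (1 + |u|) ^ ((c.re - σ) / p) * ‖mellin φ (σ + u * Complex.I)‖)
    (hσ : 0 < (c.re - σ) / p) (hr : 0 ≤ r.re) (hr0 : r ≠ 0) :
    mellin (fun y => φ y * Complex.exp (-(r * (y ^ p : ℝ)))) c =
      (2 * π * |p|)⁻¹ * ∫ u : ℝ, expPowKernel φ p c r (σ + u * Complex.I) := by
  have hvert : Complex.VerticalIntegrable (mellin φ) σ := by
    refine hφint.mono' (continuous_mellin_vertical hφσ).aestronglyMeasurable
      (.of_forall fun u => ?_)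
    exact le_mul_of_one_le_left (norm_nonneg _) (Real.one_le_rpow (by simp) hσ.le)
  have hinterior : Set.EqOn
      (fun r : ℂ => mellin (fun y => φ y * Complex.exp (-(r * (y ^ p : ℝ)))) c)
      (fun r : ℂ => (2 * π * |p|)⁻¹ * ∫ u : ℝ, expPowKernel φ p c r (σ + u * Complex.I))
      {r | 0 < r.re} := fun r hr =>
    mellin_mul_exp_neg_mul_rpow_of_re_pos hφ hφσ hvert hσ hr
  refine hinterior.of_subset_closure (t := {r | 0 ≤ r.re} \ {0})
    ((continuousOn_mellin_mul_exp_neg_mul_rpow hφ hφc p).mono Set.sdiff_subset)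
    (continuousOn_const.mul (continuousOn_integral_expPowKernel hφσ hφint hσ)) ?_ ?_
    (show r ∈ {r : ℂ | 0 ≤ r.re} \ {0} from ⟨hr, hr0⟩)
  · rintro r (hr : 0 < r.re)
    exact ⟨hr.le, fun h => by simp_all⟩
  · rw [Complex.closure_setOfPred_lt_re]
    exact Set.sdiff_subset

end MellinBarnesIntegral

section TestFunction

variable {E : Type*} [NormedAddCommGroup E] [NormedSpace ℂ E] {φ : ℝ → E}

theorem mellinConvergent_of_hasCompactSupport (hφ : Continuous φ) (hcs : HasCompactSupport φ)
    (hsupp : tsupport φ ⊆ Set.Ioi 0) (s : ℂ) : MellinConvergent φ s := by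
  have hcont : Continuous fun y : ℝ => (y : ℂ) ^ (s - 1) • φ y := by
    refine continuous_of_tsupport fun y hy => ?_
    have hslit : (y : ℂ) ∈ Complex.slitPlane :=
      Complex.ofReal_mem_slitPlane.2 (hsupp (tsupport_smul_subset_right _ φ hy))
    exact ((continuousAt_cpow_const hslit).comp Complex.continuous_ofReal.continuousAt).smul
      hφ.continuousAt
  exact (hcont.integrable_of_hasCompactSupport hcs.smul_left).integrableOn

theorem exists_schwartzMap_eq_mellin_vertical (hφ : ContDiff ℝ (⊤ : ℕ∞) φ)
    (hcs : HasCompactSupport φ) (hsupp : tsupport φ ⊆ Set.Ioi 0) (σ : ℝ) :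
    ∃ g : SchwartzMap ℝ E, ∀ u : ℝ, mellin φ (σ + u * Complex.I) = g u := by
  set f : ℝ → E := fun u => Real.exp (-σ * u) • φ (Real.exp (-u)) with hf
  have hfsmooth : ContDiff ℝ (⊤ : ℕ∞) f := by fun_prop
  have hfcs : HasCompactSupport f := by
    refine HasCompactSupport.intro (K := (fun y => -Real.log y) '' tsupport φ)
      (hcs.isCompact.image_of_continuousOn fun y hy => ?_) fun u hu => ?_
    · exact (Real.continuousAt_log (hsupp hy).ne').neg.continuousWithinAt
    · have hzero : φ (Real.exp (-u)) = 0 :=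
        image_eq_zero_of_notMem_tsupport fun hmem => hu ⟨_, hmem, by simp⟩
      simp [hf, hzero]
  have hscale : (2 * π)⁻¹ ≠ 0 := by positivity
  refine ⟨SchwartzMap.compCLMOfContinuousLinearEquiv ℂ
    (ContinuousLinearEquiv.unitsEquivAut ℝ (Units.mk0 _ hscale))
    (FourierTransform.fourier (hfcs.toSchwartzMap hfsmooth)), fun u => ?_⟩
  have hcoe : ⇑(hfcs.toSchwartzMap hfsmooth) = f := rfl
  rw [SchwartzMap.compCLMOfContinuousLinearEquiv_apply, SchwartzMap.fourier_coe, hcoe,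
    mellin_eq_fourier]
  simp [hf, div_eq_mul_inv]

theorem integrable_one_add_norm_rpow_mul_norm_schwartzMap {D F : Type*} [NormedAddCommGroup D]
    [NormedSpace ℝ D] [MeasurableSpace D] [BorelSpace D] [SecondCountableTopology D]
    [NormedAddCommGroup F] [NormedSpace ℝ F] (μ : Measure D) [μ.HasTemperateGrowth]
    (g : SchwartzMap D F) (κ : ℝ) : Integrable (fun x => (1 + ‖x‖) ^ κ * ‖g x‖) μ := by
  obtain ⟨n, hn⟩ := exists_nat_ge κ
  have hpow : Integrable (fun x => 2 ^ (n - 1) * (‖x‖ ^ 0 * ‖g x‖ + ‖x‖ ^ n * ‖g x‖)) μ :=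
    ((g.integrable_pow_mul μ 0).add (g.integrable_pow_mul μ n)).const_mul _
  have hcont : Continuous fun x => (1 + ‖x‖) ^ κ * ‖g x‖ :=
    (Continuous.rpow_const (by fun_prop) fun x => Or.inl (by positivity)).mul g.continuous.norm
  refine hpow.mono' hcont.aestronglyMeasurable (.of_forall fun x => ?_)
  calc ‖(1 + ‖x‖) ^ κ * ‖g x‖‖ = (1 + ‖x‖) ^ κ * ‖g x‖ := Real.norm_of_nonneg (by positivity)
    _ ≤ (1 + ‖x‖) ^ (n : ℝ) * ‖g x‖ := by
      gcongr
      simp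
    _ ≤ 2 ^ (n - 1) * (1 ^ n + ‖x‖ ^ n) * ‖g x‖ := by
      rw [Real.rpow_natCast]
      gcongr
      exact add_pow_le zero_le_one (norm_nonneg x) n
    _ = 2 ^ (n - 1) * (‖x‖ ^ 0 * ‖g x‖ + ‖x‖ ^ n * ‖g x‖) := by ring

theorem integrable_one_add_abs_rpow_mul_norm_mellin (hφ : ContDiff ℝ (⊤ : ℕ∞) φ)
    (hcs : HasCompactSupport φ) (hsupp : tsupport φ ⊆ Set.Ioi 0) (κ σ : ℝ) :
    Integrable fun u : ℝ => (1 + |u|) ^ κ * ‖mellin φ (σ + u * Complex.I)‖ := by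
  obtain ⟨g, hg⟩ := exists_schwartzMap_eq_mellin_vertical hφ hcs hsupp σ
  simpa only [hg, Real.norm_eq_abs] using
    integrable_one_add_norm_rpow_mul_norm_schwartzMap volume g κ

end TestFunction

section MellinBarnes

theorem mbKernel_eq_expPowKernel (φ : ℝ → ℂ) {a δ : ℝ} (ha : 0 < a) (t : ℝ)
    (hδ : δ = 1 ∨ δ = -1) (s : ℂ) :
    mbKernel φ a t δ s =
      expPowKernel φ (-(1 / 2)) (-(Complex.I * t)) (a * (δ * Complex.I)) s := by
  have hw : (-(Complex.I * t) - s) / ((-(1 / 2) : ℝ) : ℂ) = 2 * (s + Complex.I * t) := by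
    push_cast
    ring
  have hδ0 : (δ : ℂ) * Complex.I ≠ 0 := by rcases hδ with rfl | rfl <;> simp
  have hlog : Complex.log (δ * Complex.I) = δ * (π / 2) * Complex.I := by
    rcases hδ with rfl | rfl
    · simp [Complex.log_I]
    · simp [Complex.log_neg_I]
  have ha0 : (a : ℂ) ≠ 0 := Complex.ofReal_ne_zero.2 ha.ne'
  rw [mbKernel, expPowKernel, hw, Complex.cpow_def_of_ne_zero (mul_ne_zero ha0 hδ0),
    Complex.log_ofReal_mul ha hδ0, hlog, add_mul, Complex.exp_add, Complex.ofReal_log ha.le,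
    ← Complex.cpow_def_of_ne_zero ha0]
  ring_nf

theorem mul_exp_div_sqrt_eq_cpow_smul (φ : ℝ → ℂ) (a t δ : ℝ) {y : ℝ} (hy : 0 < y) :
    φ y * (y : ℂ) ^ (-1 - Complex.I * t) *
        Complex.exp (-(δ : ℂ) * Complex.I * a / (Real.sqrt y : ℂ)) =
      (y : ℂ) ^ (-(Complex.I * t) - 1) •
        (φ y * Complex.exp (-(a * (δ * Complex.I) * (y ^ (-(1 / 2) : ℝ) : ℝ)))) := by
  rw [Real.rpow_neg hy.le, ← Real.sqrt_eq_rpow, Complex.ofReal_inv, smul_eq_mul, ← mul_assoc,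
    mul_comm _ (φ y)]
  ring_nf

theorem stmt_7_general (φ : ℝ → ℂ) (hφ : ContinuousOn φ (Set.Ioi 0)) (a t δ σ : ℝ)
    (hφ0 : MellinConvergent φ 0) (hφσ : MellinConvergent φ σ)
    (hφint : Integrable fun u : ℝ => (1 + |u|) ^ (2 * σ) * ‖mellin φ (σ + u * Complex.I)‖)
    (ha : 0 < a) (hδ : δ = 1 ∨ δ = -1) (hσ : 0 < σ) :
    Integrable (fun u : ℝ => mbKernel φ a t δ (σ + u * Complex.I)) ∧
    ∫ y in Set.Ioi (0 : ℝ), φ y * (y : ℂ) ^ (-1 - Complex.I * t) *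
        Complex.exp (-(δ : ℂ) * Complex.I * a / (Real.sqrt y : ℂ)) =
      (1 / ((π : ℂ) * Complex.I)) *
        ∫ u : ℝ, mbKernel φ a t δ (σ + u * Complex.I) * Complex.I := by
  have hre : (-(Complex.I * t)).re = 0 := by simp
  have hκ : ((-(Complex.I * t)).re - σ) / (-(1 / 2)) = 2 * σ := by
    rw [hre]
    ring
  have hφ0' : MellinConvergent φ (-(Complex.I * t)) := mellinConvergent_of_re_eq hφ0 hre
  have hr : 0 ≤ (a * (δ * Complex.I)).re := by simp
  have hr0 : a * (δ * Complex.I) ≠ 0 := by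
    rcases hδ with rfl | rfl <;> simp [ha.ne']
  have hκ0 : 0 < ((-(Complex.I * t)).re - σ) / (-(1 / 2)) := by rw [hκ]; positivity
  rw [← hκ] at hφint
  simp only [mbKernel_eq_expPowKernel φ ha t hδ]
  refine ⟨integrable_expPowKernel hφσ hφint hκ0 hr hr0, ?_⟩
  rw [setIntegral_congr_fun measurableSet_Ioi fun y hy =>
    mul_exp_div_sqrt_eq_cpow_smul φ a t δ hy]
  have hmain := mellin_mul_exp_neg_mul_rpow hφ hφ0' hφσ hφint hκ0 hr hr0
  rw [mellin] at hmain
  have habs : |(-(1 / 2) : ℝ)| = 1 / 2 := by norm_num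
  rw [hmain, integral_mul_const, habs, mul_one_div, mul_div_cancel_left₀ _ two_ne_zero,
    Complex.ofReal_inv]
  field_simp [Complex.I_ne_zero]

end MellinBarnes

/-- The Mellin–Barnes evaluation (4.24)–(4.25) of Jutila–Motohashi:
`∫₀^∞ φ(y) y^{−1−it} e^{−δia/√y} dy
  = (1/(πi)) ∫_{Re s = σ} φ*(s) Γ(2(s+it)) e^{−δπi(s+it)} a^{−2(s+it)} ds`,
the right-hand side converging absolutely. -/
theorem stmt_7 (φ : ℝ → ℂ) (hφ : ContDiff ℝ (⊤ : ℕ∞) φ) (hcs : HasCompactSupport φ)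
    (hsupp : tsupport φ ⊆ Set.Ioi 0)
    (a t δ σ : ℝ) (ha : 0 < a) (hδ : δ = 1 ∨ δ = -1) (hσ0 : 0 < σ) (hσ : σ < 1 / 2) :
    Integrable (fun u : ℝ => mbKernel φ a t δ (σ + u * Complex.I)) ∧
    ∫ y in Set.Ioi (0 : ℝ), φ y * (y : ℂ) ^ (-1 - Complex.I * t) *
        Complex.exp (-(δ : ℂ) * Complex.I * a / (Real.sqrt y : ℂ)) =
      (1 / ((π : ℂ) * Complex.I)) *
        ∫ u : ℝ, mbKernel φ a t δ (σ + u * Complex.I) * Complex.I := by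
  exact stmt_7_general φ hφ.continuous.continuousOn a t δ σ
    (mellinConvergent_of_hasCompactSupport hφ.continuous hcs hsupp 0)
    (mellinConvergent_of_hasCompactSupport hφ.continuous hcs hsupp σ)
    (integrable_one_add_abs_rpow_mul_norm_mellin hφ hcs hsupp _ σ) ha hδ hσ0
end

section
/- Let κ, t ∈ ℝ, ε ∈ {−1,1}, a := (1−ε)/2, let γ ≥ 4 be real, T > 0, and C₀ > 0. Let τ̌ : ℕ≥1 → ℂ satisfy |τ̌(n)| ≤ C₀ n^{1/2} for all n ≥ 1, and let H : ℂ → ℂ be an entire function of at most polynomial growth in every vertical strip (i.e. for all σ₁ < σ₂ there exist A, B > 0 with |H(σ+iu)| ≤ A(1+|u|)^{B} whenever σ₁ ≤ σ ≤ σ₂), such that H(s)² = Σ_{n=1}^{∞} τ̌(n) n^{−s} for every s with Re s > 2 (the series converging absolutely there), and such that H(s) = χ(s) H(1−s) for every s on the line Re s = 1/2 − γ/2 at which none of the numbers (s+iκ+a)/2, (s−iκ+a)/2, (1−s+iκ+a)/2, (1−s−iκ+a)/2 is a non-positive integer. Then both series below converge absolutely and Σ_{n=1}^{∞} τ̌(n)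 n^{−1/2−it} exp( −(n/T)^{γ} ) = H(1/2+it)² + Σ_{n=1}^{∞} τ̌(n) n^{−1/2+it} R(n). -/
open MeasureTheory Real

/-- The integrand of the contour integral `R(n)` from the proof of Lemma 9 of
Jutila–Motohashi, with parity `ε ∈ {−1,1}`, `a = (1−ε)/2`. -/
noncomputable def Rkernel (κ t ε γ T : ℝ) (n : ℕ) (ξ : ℂ) : ℂ :=
  (Complex.Gamma ((1 / 2 - ξ - Complex.I * t + Complex.I * κ + (1 - (ε : ℂ)) / 2) / 2) /
      Complex.Gamma ((1 / 2 + ξ + Complex.I * t - Complex.I * κ + (1 - (ε : ℂ)) / 2) / 2)) ^ 2 *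
    (Complex.Gamma ((1 / 2 - ξ - Complex.I * t - Complex.I * κ + (1 - (ε : ℂ)) / 2) / 2) /
      Complex.Gamma ((1 / 2 + ξ + Complex.I * t + Complex.I * κ + (1 - (ε : ℂ)) / 2) / 2)) ^ 2 *
    ((π ^ 4 * n * T : ℝ) : ℂ) ^ ξ * Complex.Gamma (ξ / γ)

/-- The contour integral `R(n)` of (3.46) in Jutila–Motohashi, taken over the
upward-oriented vertical line `Re ξ = −γ/2`. -/
noncomputable def Rn (κ t ε γ T : ℝ) (n : ℕ) : ℂ :=
  ((π : ℂ) ^ (4 * Complex.I * t) / (2 * (π : ℂ) * Complex.I * γ)) *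
    ∫ u : ℝ, Rkernel κ t ε γ T n (-(γ / 2 : ℝ) + u * Complex.I) * Complex.I

/-- The factor `χ(s)` of (1.10) in Jutila–Motohashi, with parity `ε ∈ {−1,1}`,
`a = (1−ε)/2`. -/
noncomputable def chiFactor (κ ε : ℝ) (s : ℂ) : ℂ :=
  (ε : ℂ) * (π : ℂ) ^ (2 * s - 1) *
    Complex.Gamma ((1 - s + Complex.I * κ + (1 - (ε : ℂ)) / 2) / 2) *
    Complex.Gamma ((1 - s - Complex.I * κ + (1 - (ε : ℂ)) / 2) / 2) /
    (Complex.Gamma ((s + Complex.I * κ + (1 - (ε : ℂ)) / 2) / 2) *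
      Complex.Gamma ((s - Complex.I * κ + (1 - (ε : ℂ)) / 2) / 2))

/-!
The cutoff `exp (-(n / T) ^ γ)` has Mellin transform `γ⁻¹ T ^ ξ Γ(ξ / γ)`, so Mellin inversion turns
the smoothed sum of the coefficients of `H ^ 2` into an integral of `H(1/2 + it + ξ) ^ 2` against
this kernel over a line far to the right. Moving the line to `Re ξ = -γ / 2` crosses only the pole
of `Γ(ξ / γ)` at `0`, whose residue produces the central value. On the new line the functional
equation replaces `H(s)` by `χ(s) H(1 - s)`, and `H(1 - s) ^ 2` can again be expanded and integrated
term by term.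

All convergence rests on the exponential decay of `Γ` in vertical strips. The reflection formula
gives it on `Re z = 1/2`, the recurrence on the lines `Re z = n + 1/2`, and a comparison of Beta
integrals everywhere in between. Written with `cos` and `Gammaℂ`, the factor `χ` inherits a
subexponential bound to the left of `Re s = 1`.
-/

section

open Complex (I Gammaℝ Gammaℂ)
open Asymptotics Filter Set Topology

/-- Subexponential growth of `F` on `S` in the imaginary direction: `F s = O(exp (δ |Im s|))` for
every `δ > 0`. Weaker than polynomial growth, it is all that is needed to integrate against the
exponentially decaying Gamma function. -/
def SubexpOn (F : ℂ → ℂ) (S : Set ℂ) : Prop :=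
  ∀ δ : ℝ, 0 < δ → F =O[𝓟 S] fun s => Real.exp (δ * |s.im|)

namespace SubexpOn

variable {F G : ℂ → ℂ} {S S' : Set ℂ}

lemma mono (hF : SubexpOn F S) (h : S' ⊆ S) : SubexpOn F S' := fun δ hδ =>
  (hF δ hδ).mono (principal_mono.mpr h)

lemma congr (hF : SubexpOn F S) (h : EqOn F G S) : SubexpOn G S := fun δ hδ =>
  (hF δ hδ).congr' (eventuallyEq_principal.mpr h) .rfl

lemma const_mul (hF : SubexpOn F S) (c : ℂ) : SubexpOn (fun s => c * F s) S := fun δ hδ =>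
  (hF δ hδ).const_mul_left c

lemma mul (hF : SubexpOn F S) (hG : SubexpOn G S) : SubexpOn (fun s => F s * G s) S := by
  intro δ hδ
  refine ((hF (δ / 2) (half_pos hδ)).mul (hG (δ / 2) (half_pos hδ))).congr_right fun s => ?_
  rw [← Real.exp_add, ← add_mul, add_halves]

lemma sq (hF : SubexpOn F S) : SubexpOn (fun s => F s ^ 2) S := by
  simpa only [pow_two] using hF.mul hF

lemma comp_const_add (hF : SubexpOn F S) (s₀ : ℂ) :
    SubexpOn (fun ξ => F (s₀ + ξ)) ((fun ξ => s₀ + ξ) ⁻¹' S) := by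
  intro δ hδ
  obtain ⟨C, hC⟩ := isBigO_principal.mp (hF δ hδ)
  have hC₀ : ∀ ξ, s₀ + ξ ∈ S → ‖F (s₀ + ξ)‖ ≤ |C| * Real.exp (δ * |(s₀ + ξ).im|) := fun ξ hξ =>
    (hC _ hξ).trans (by rw [Real.norm_of_nonneg (Real.exp_pos _).le]; gcongr; exact le_abs_self C)
  refine isBigO_principal.mpr ⟨|C| * Real.exp (δ * |s₀.im|), fun ξ hξ => (hC₀ ξ hξ).trans ?_⟩
  rw [Real.norm_of_nonneg (Real.exp_pos _).le, mul_assoc, ← Real.exp_add, ← mul_add]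
  gcongr
  exact abs_add_le _ _

end SubexpOn

lemma one_add_rpow_le_mul_exp {B δ x : ℝ} (hB : 0 < B) (hδ : 0 < δ) (hx : 0 ≤ x) :
    (1 + x) ^ B ≤ (1 + B / δ) ^ B * Real.exp (δ * x) := by
  have hlin : 1 + x ≤ (1 + B / δ) * Real.exp (δ * x / B) := by
    have hexp : δ * x / B + 1 ≤ Real.exp (δ * x / B) := Real.add_one_le_exp _
    calc 1 + x ≤ (1 + B / δ) * (δ * x / B + 1) := by
          have : (1 + B / δ) * (δ * x / B + 1) = 1 + x + (B / δ + δ * x / B) := by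
            field_simp; ring
          rw [this]
          exact le_add_of_nonneg_right (by positivity)
      _ ≤ _ := by gcongr
  calc (1 + x) ^ B ≤ ((1 + B / δ) * Real.exp (δ * x / B)) ^ B := by gcongr
    _ = (1 + B / δ) ^ B * Real.exp (δ * x) := by
      rw [Real.mul_rpow (by positivity) (by positivity), ← Real.exp_mul, div_mul_cancel₀ _ hB.ne']

lemma subexpOn_of_norm_le_rpow {F : ℂ → ℂ} {S : Set ℂ} {A B : ℝ} (hB : 0 < B)
    (h : ∀ s ∈ S, ‖F s‖ ≤ A * (1 + |s.im|) ^ B) : SubexpOn F S := by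
  intro δ hδ
  have hpow : (fun s : ℂ => (1 + |s.im|) ^ B) =O[𝓟 S] fun s => Real.exp (δ * |s.im|) := by
    refine isBigO_principal.mpr ⟨(1 + B / δ) ^ B, fun s _ => ?_⟩
    rw [Real.norm_of_nonneg (by positivity), Real.norm_of_nonneg (by positivity)]
    exact one_add_rpow_le_mul_exp hB hδ (abs_nonneg _)
  refine IsBigO.trans (isBigO_principal.mpr ⟨A, fun s hs => ?_⟩) hpow
  rw [Real.norm_of_nonneg (by positivity)]
  exact h s hs

lemma norm_betaIntegral_le {u v : ℂ} (hu : 0 < u.re) (hv : 0 < v.re) :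
    ‖Complex.betaIntegral u v‖ ≤ ProbabilityTheory.beta u.re v.re := by
  have hreal : Complex.betaIntegral u.re v.re =
      ((∫ x : ℝ in 0..1, ‖(x : ℂ) ^ (u - 1) * (1 - (x : ℂ)) ^ (v - 1)‖ : ℝ) : ℂ) := by
    rw [Complex.betaIntegral, ← intervalIntegral.integral_ofReal,
      intervalIntegral.integral_of_le zero_le_one, intervalIntegral.integral_of_le zero_le_one,
      integral_Ioc_eq_integral_Ioo, integral_Ioc_eq_integral_Ioo]
    refine setIntegral_congr_fun measurableSet_Ioo fun x hx => ?_
    have hx' : 0 < 1 - x := sub_pos.mpr hx.2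
    have hcast : 1 - (x : ℂ) = (1 - x : ℝ) := by push_cast; rfl
    rw [hcast, norm_mul, Complex.norm_cpow_eq_rpow_re_of_pos hx.1,
      Complex.norm_cpow_eq_rpow_re_of_pos hx', Complex.ofReal_mul, Complex.ofReal_cpow hx.1.le,
      Complex.ofReal_cpow hx'.le]
    simp only [Complex.sub_re, Complex.one_re, Complex.ofReal_sub, Complex.ofReal_one]
  rw [ProbabilityTheory.beta_eq_betaIntegralReal _ _ hu hv, hreal, Complex.ofReal_re]
  exact intervalIntegral.norm_integral_le_integral_norm zero_le_one

-- For fixed `Im z`, the ratio `‖Γ(z)‖ / Γ(Re z)` increases with `Re z`: decay on one vertical line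
-- therefore carries over to every line to its left.
lemma norm_Gamma_mul_Gamma_le {z : ℂ} {δ : ℝ} (hz : 0 < z.re) (hδ : 0 < δ) :
    ‖Complex.Gamma z‖ * Real.Gamma (z.re + δ) ≤ ‖Complex.Gamma (z + δ)‖ * Real.Gamma z.re := by
  have hδ' : 0 < (δ : ℂ).re := by simpa only [Complex.ofReal_re] using hδ
  have hΓδ : 0 < Real.Gamma δ := Real.Gamma_pos_of_pos hδ
  have hbeta : ‖Complex.Gamma z‖ * Real.Gamma δ =
      ‖Complex.Gamma (z + δ)‖ * ‖Complex.betaIntegral z δ‖ := by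
    rw [← norm_mul, ← Complex.Gamma_mul_Gamma_eq_betaIntegral hz hδ', norm_mul,
      Complex.Gamma_ofReal, Complex.norm_real, Real.norm_of_nonneg hΓδ.le]
  have hle : ‖Complex.betaIntegral z δ‖ ≤ Real.Gamma z.re * Real.Gamma δ / Real.Gamma (z.re + δ) :=
    norm_betaIntegral_le hz hδ'
  refine le_of_mul_le_mul_right ?_ hΓδ
  calc ‖Complex.Gamma z‖ * Real.Gamma (z.re + δ) * Real.Gamma δ
      = ‖Complex.Gamma (z + δ)‖ * ‖Complex.betaIntegral z δ‖ * Real.Gamma (z.re + δ) := by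
        rw [← hbeta]; ring
    _ ≤ ‖Complex.Gamma (z + δ)‖ * (Real.Gamma z.re * Real.Gamma δ / Real.Gamma (z.re + δ)) *
          Real.Gamma (z.re + δ) := by gcongr
    _ = ‖Complex.Gamma (z + δ)‖ * Real.Gamma z.re * Real.Gamma δ := by
        rw [← mul_div_assoc, div_mul_cancel₀ _ (Real.Gamma_pos_of_pos (add_pos hz hδ)).ne',
          mul_assoc]

lemma norm_Gamma_sq_of_re_eq_half {z : ℂ} (hz : z.re = 1 / 2) :
    ‖Complex.Gamma z‖ ^ 2 = π / Real.cosh (π * z.im) := by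
  have hz' : z = 1 / 2 + z.im * I := by
    apply Complex.ext <;> simp [hz]
  have hconj : 1 - z = (starRingEnd ℂ) z := by
    apply Complex.ext
    · rw [Complex.conj_re, Complex.sub_re, Complex.one_re, hz]
      norm_num
    · rw [Complex.conj_im, Complex.sub_im, Complex.one_im, zero_sub]
  have hsin : Complex.sin (π * z) = (Real.cosh (π * z.im) : ℝ) := by
    rw [hz', show (π : ℂ) * (1 / 2 + z.im * I) = (π * z.im : ℂ) * I + π / 2 by ring,
      Complex.sin_add_pi_div_two, Complex.cos_mul_I, ← hz']
    simp only [Complex.ofReal_cosh, Complex.ofReal_mul]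
  have hrefl := Complex.Gamma_mul_Gamma_one_sub z
  rw [hconj, Complex.Gamma_conj, Complex.mul_conj, hsin, Complex.normSq_eq_norm_sq] at hrefl
  exact_mod_cast hrefl

lemma isBigO_Gamma_line_half {θ : ℝ} (hθ : θ ≤ π / 2) :
    Complex.Gamma =O[𝓟 (Complex.re ⁻¹' {1 / 2})] fun z => Real.exp (-(θ * |z.im|)) := by
  refine isBigO_principal.mpr ⟨√(2 * π), fun z hz => abs_le_of_sq_le_sq' ?_ (by positivity) |>.2⟩
  have hcosh : Real.exp (2 * (θ * |z.im|)) ≤ 2 * Real.cosh (π * z.im) := by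
    have hθz : 2 * (θ * |z.im|) ≤ |π * z.im| := by
      rw [abs_mul, abs_of_pos Real.pi_pos, ← mul_assoc]
      gcongr
      linarith
    rw [← Real.cosh_abs, Real.cosh_eq]
    linarith [Real.exp_le_exp.mpr hθz, Real.exp_pos (-|π * z.im|)]
  rw [norm_Gamma_sq_of_re_eq_half hz, mul_pow, Real.sq_sqrt (by positivity),
    Real.norm_of_nonneg (by positivity), ← Real.exp_nat_mul, Nat.cast_ofNat, mul_neg, Real.exp_neg,
    ← div_eq_mul_inv, div_le_div_iff₀ (Real.cosh_pos _) (Real.exp_pos _)]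
  nlinarith [Real.pi_pos]

lemma subexpOn_id_line (σ : ℝ) : SubexpOn (fun s => s) (Complex.re ⁻¹' {σ}) := by
  refine subexpOn_of_norm_le_rpow (A := |σ| + 1) zero_lt_one fun s hs => ?_
  have hre : s.re = σ := hs
  calc ‖s‖ ≤ |σ| + |s.im| := hre ▸ Complex.norm_le_abs_re_add_abs_im s
    _ ≤ (|σ| + 1) * (1 + |s.im|) ^ (1 : ℝ) := by
      rw [Real.rpow_one]
      nlinarith [mul_nonneg (abs_nonneg σ) (abs_nonneg s.im)]

lemma isBigO_Gamma_line_add_half (n : ℕ) {θ : ℝ} (hθ : θ < π / 2) :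
    Complex.Gamma =O[𝓟 (Complex.re ⁻¹' {(n : ℝ) + 1 / 2})] fun z => Real.exp (-(θ * |z.im|)) := by
  induction n generalizing θ with
  | zero => simpa only [Nat.cast_zero, zero_add] using isBigO_Gamma_line_half hθ.le
  | succ n ih =>
    obtain ⟨θ', hθθ', hθ'⟩ := exists_between hθ
    have hshift : Tendsto (fun z : ℂ => z - 1) (𝓟 (Complex.re ⁻¹' {((n + 1 : ℕ) : ℝ) + 1 / 2}))
        (𝓟 (Complex.re ⁻¹' {(n : ℝ) + 1 / 2})) := by
      refine tendsto_principal_principal.mpr fun z hz => ?_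
      simp only [mem_preimage, mem_singleton_iff, Complex.sub_re, Complex.one_re] at hz ⊢
      rw [hz, Nat.cast_succ]
      ring
    have hmul := ((subexpOn_id_line (n + 1 / 2) (θ' - θ) (sub_pos.mpr hθθ')).mul
      (ih hθ')).comp_tendsto hshift
    refine hmul.congr' (eventuallyEq_principal.mpr fun z hz => ?_) (.of_eq (funext fun z => ?_))
    · have hz0 : z - 1 ≠ 0 := by
        intro h
        have hre : z.re = n + 1 + 1 / 2 := by rw [← Nat.cast_succ]; exact hz
        rw [sub_eq_zero.mp h, Complex.one_re] at hre
        linarith [(n.cast_nonneg : (0 : ℝ) ≤ n)]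
      simpa only [Function.comp_apply, sub_add_cancel] using
        (Complex.Gamma_add_one (z - 1) hz0).symm
    · simp only [Function.comp_apply, Complex.sub_im, Complex.one_im, sub_zero]
      rw [← Real.exp_add]
      ring_nf

theorem isBigO_Gamma_strip {σ₁ σ₂ θ : ℝ} (hσ₁ : 0 < σ₁) (hθ : θ < π / 2) :
    Complex.Gamma =O[𝓟 (Complex.re ⁻¹' Icc σ₁ σ₂)] fun z => Real.exp (-(θ * |z.im|)) := by
  obtain ⟨n, hn⟩ := exists_nat_ge σ₂
  obtain ⟨C, hC⟩ := isBigO_principal.mp (isBigO_Gamma_line_add_half n hθ)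
  obtain ⟨K, hK⟩ : ∃ K, ∀ x ∈ Icc σ₁ σ₂, ‖Real.Gamma x‖ ≤ K :=
    isCompact_Icc.exists_bound_of_continuousOn
      (Real.differentiableOn_Gamma_Ioi.continuousOn.mono fun x hx => hσ₁.trans_le hx.1)
  have hΓn : 0 < Real.Gamma (n + 1 / 2) := Real.Gamma_pos_of_pos (by positivity)
  refine isBigO_principal.mpr ⟨C * K / Real.Gamma (n + 1 / 2), fun z hz => ?_⟩
  have hre : z.re + (n + 1 / 2 - z.re) = n + 1 / 2 := by ring
  have hδ : 0 < n + 1 / 2 - z.re := by linarith [hz.2]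
  have hmono := norm_Gamma_mul_Gamma_le (hσ₁.trans_le hz.1) hδ
  have hline := hC (z + (n + 1 / 2 - z.re : ℝ)) (by
    simp only [mem_preimage, mem_singleton_iff, Complex.add_re, Complex.ofReal_re, hre])
  rw [Complex.add_im, Complex.ofReal_im, add_zero] at hline
  rw [hre] at hmono
  rw [div_mul_eq_mul_div, le_div_iff₀ hΓn]
  calc ‖Complex.Gamma z‖ * Real.Gamma (n + 1 / 2)
      ≤ ‖Complex.Gamma (z + (n + 1 / 2 - z.re : ℝ))‖ * Real.Gamma z.re := hmono
    _ ≤ C * ‖Real.exp (-(θ * |z.im|))‖ * K := by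
      refine mul_le_mul hline ((le_abs_self _).trans (hK _ hz)) ?_ ((norm_nonneg _).trans hline)
      exact (Real.Gamma_pos_of_pos (hσ₁.trans_le hz.1)).le
    _ = _ := by ring

/-- The kernel `T ^ ξ * Γ(ξ / γ)`: up to the factor `γ⁻¹` it is the Mellin transform of the cutoff
`exp (-(x / T) ^ γ)`. -/
noncomputable def smoothingKernel (γ T : ℝ) (ξ : ℂ) : ℂ :=
  (T : ℂ) ^ ξ * Complex.Gamma (ξ / γ)

/-- The function `T ^ ξ * Γ(ξ / γ + 1)`, which is `ξ / γ` times `smoothingKernel γ T ξ` with the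
pole at `0` removed. -/
noncomputable def regularizedKernel (γ T : ℝ) (ξ : ℂ) : ℂ :=
  (T : ℂ) ^ ξ * Complex.Gamma (ξ / γ + 1)

lemma smoothingKernel_eq_div {γ : ℝ} (hγ : γ ≠ 0) (T : ℝ) {ξ : ℂ} (hξ : ξ ≠ 0) :
    smoothingKernel γ T ξ = γ * regularizedKernel γ T ξ / ξ := by
  have hγ' : (γ : ℂ) ≠ 0 := Complex.ofReal_ne_zero.mpr hγ
  rw [smoothingKernel, regularizedKernel, Complex.Gamma_add_one _ (div_ne_zero hξ hγ')]
  field_simp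

lemma regularizedKernel_zero (γ T : ℝ) : regularizedKernel γ T 0 = 1 := by
  rw [regularizedKernel, Complex.cpow_zero, zero_div, zero_add, Complex.Gamma_one, one_mul]

lemma re_div_add_one (γ : ℝ) (ξ : ℂ) : (ξ / γ + 1).re = ξ.re / γ + 1 := by
  rw [Complex.add_re, Complex.div_ofReal_re, Complex.one_re]

lemma div_add_one_pos {γ x : ℝ} (hγ : 0 < γ) (hx : -γ < x) : 0 < x / γ + 1 := by
  rw [div_add_one hγ.ne']
  exact div_pos (by linarith) hγ

lemma differentiableAt_Gamma_of_re_pos {z : ℂ} (hz : 0 < z.re) :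
    DifferentiableAt ℂ Complex.Gamma z := by
  refine Complex.differentiableAt_Gamma z fun m hm => ?_
  rw [hm, Complex.neg_re, Complex.natCast_re, neg_pos] at hz
  exact hz.not_ge m.cast_nonneg

lemma differentiableOn_regularizedKernel {γ T : ℝ} (hγ : 0 < γ) (hT : T ≠ 0) :
    DifferentiableOn ℂ (regularizedKernel γ T) (Complex.re ⁻¹' Ioi (-γ)) := by
  intro ξ hξ
  have hre : 0 < (ξ / γ + 1).re := by
    rw [re_div_add_one]
    exact div_add_one_pos hγ hξ
  refine (DifferentiableAt.mul ?_ ?_).differentiableWithinAt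
  · exact differentiableAt_id.const_cpow (Or.inl (Complex.ofReal_ne_zero.mpr hT))
  · exact (differentiableAt_Gamma_of_re_pos hre).comp ξ (by fun_prop)

lemma isBigO_cpow_strip {T : ℝ} (hT : 0 < T) (σ₁ σ₂ : ℝ) :
    (fun ξ : ℂ => (T : ℂ) ^ ξ) =O[𝓟 (Complex.re ⁻¹' Icc σ₁ σ₂)] fun _ => (1 : ℝ) := by
  obtain ⟨K, hK⟩ := isCompact_Icc.exists_bound_of_continuousOn
    (Real.continuous_const_rpow hT.ne').continuousOn (s := Icc σ₁ σ₂)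
  refine isBigO_principal.mpr ⟨K, fun ξ hξ => ?_⟩
  rw [Complex.norm_cpow_eq_rpow_re_of_pos hT, norm_one, mul_one]
  exact (le_abs_self _).trans (hK _ hξ)

lemma isBigO_regularizedKernel {γ T σ₁ : ℝ} (hγ : 0 < γ) (hT : 0 < T) (hσ₁ : -γ < σ₁) (σ₂ : ℝ) :
    regularizedKernel γ T =O[𝓟 (Complex.re ⁻¹' Icc σ₁ σ₂)] fun ξ => Real.exp (-(|ξ.im| / γ)) := by
  have hmap : Tendsto (fun ξ : ℂ => ξ / γ + 1) (𝓟 (Complex.re ⁻¹' Icc σ₁ σ₂))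
      (𝓟 (Complex.re ⁻¹' Icc (σ₁ / γ + 1) (σ₂ / γ + 1))) := by
    refine tendsto_principal_principal.mpr fun ξ hξ => ?_
    rw [mem_preimage, re_div_add_one]
    exact ⟨by gcongr; exact hξ.1, by gcongr; exact hξ.2⟩
  have hΓ := (isBigO_Gamma_strip (σ₂ := σ₂ / γ + 1) (div_add_one_pos hγ hσ₁)
    (by linarith [Real.pi_gt_three] : 1 < π / 2)).comp_tendsto hmap
  refine ((isBigO_cpow_strip hT σ₁ σ₂).mul hΓ).congr_right fun ξ => ?_
  rw [Function.comp_apply, Complex.add_im, Complex.one_im, add_zero, Complex.div_ofReal_im, abs_div,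
    abs_of_pos hγ, one_mul, one_mul]

lemma re_add_mul_I (σ u : ℝ) : ((σ : ℂ) + u * I).re = σ := by simp

lemma add_mul_I_ne_zero {σ : ℝ} (hσ : σ ≠ 0) (u : ℝ) : (σ : ℂ) + u * I ≠ 0 := fun h =>
  hσ (by rw [← re_add_mul_I σ u, h, Complex.zero_re])

lemma integrable_exp_neg_mul_abs {c : ℝ} (hc : 0 < c) :
    Integrable fun u : ℝ => Real.exp (-(c * |u|)) := by
  rw [← integrableOn_univ, ← Iic_union_Ioi (a := (0 : ℝ))]
  refine IntegrableOn.union ?_ ?_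
  · refine (integrableOn_exp_mul_Iic hc 0).congr_fun (fun u hu => ?_) measurableSet_Iic
    simp only [abs_of_nonpos (mem_Iic.mp hu), mul_neg, neg_neg]
  · refine (integrableOn_exp_mul_Ioi (neg_lt_zero.mpr hc) 0).congr_fun (fun u hu => ?_)
      measurableSet_Ioi
    simp only [abs_of_pos (mem_Ioi.mp hu), neg_mul]

lemma isBigO_mul_smoothingKernel {γ T σ : ℝ} {X : ℂ → ℂ} (hγ : 0 < γ) (hT : 0 < T) (hσ : -γ < σ)
    (hσ0 : σ ≠ 0) (hX : SubexpOn X (Complex.re ⁻¹' {σ})) :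
    (fun ξ => X ξ * smoothingKernel γ T ξ) =O[𝓟 (Complex.re ⁻¹' {σ})]
      fun ξ => Real.exp (-(1 / (2 * γ) * |ξ.im|)) := by
  have hinv : (fun ξ : ℂ => ξ⁻¹) =O[𝓟 (Complex.re ⁻¹' {σ})] fun _ => (1 : ℝ) := by
    refine isBigO_principal.mpr ⟨|σ|⁻¹, fun ξ hξ => ?_⟩
    have hξ' : ξ.re = σ := hξ
    rw [norm_inv, norm_one, mul_one, ← hξ']
    exact inv_anti₀ (abs_pos.mpr (hξ' ▸ hσ0)) (Complex.abs_re_le_norm ξ)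
  have hreg := isBigO_regularizedKernel hγ hT hσ σ
  rw [Icc_self] at hreg
  refine (((hX (1 / (2 * γ)) (by positivity)).mul hreg).mul hinv |>.const_mul_left (γ : ℂ)).congr'
    (eventuallyEq_principal.mpr fun ξ hξ => ?_) (.of_eq (funext fun ξ => ?_))
  · have hξ0 : ξ ≠ 0 := by
      rintro rfl
      exact hσ0 (Eq.symm hξ)
    rw [smoothingKernel_eq_div hγ.ne' T hξ0]
    ring
  · rw [mul_one, ← Real.exp_add]
    congr 1
    field_simp
    ring

lemma continuous_smoothingKernel_line {γ T σ : ℝ} (hγ : 0 < γ) (hT : T ≠ 0) (hσ : -γ < σ)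
    (hσ0 : σ ≠ 0) : Continuous fun u : ℝ => smoothingKernel γ T (σ + u * I) := by
  have hline : Continuous fun u : ℝ => (σ : ℂ) + u * I := by fun_prop
  have hreg : Continuous fun u : ℝ => regularizedKernel γ T (σ + u * I) :=
    (differentiableOn_regularizedKernel hγ hT).continuousOn.comp_continuous hline
      fun u => by rwa [mem_preimage, re_add_mul_I]
  simp_rw [smoothingKernel_eq_div hγ.ne' T (add_mul_I_ne_zero hσ0 _)]
  exact (hreg.const_mul _).div hline (add_mul_I_ne_zero hσ0)

lemma integrable_mul_smoothingKernel {γ T σ : ℝ} {X : ℂ → ℂ} (hγ : 0 < γ) (hT : 0 < T)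
    (hσ : -γ < σ) (hσ0 : σ ≠ 0) (hX : SubexpOn X (Complex.re ⁻¹' {σ}))
    (hXcont : Continuous fun u : ℝ => X (σ + u * I)) :
    Integrable fun u : ℝ => X (σ + u * I) * smoothingKernel γ T (σ + u * I) := by
  obtain ⟨C, hC⟩ := isBigO_principal.mp (isBigO_mul_smoothingKernel hγ hT hσ hσ0 hX)
  have hc : 0 < 1 / (2 * γ) := by positivity
  refine ((integrable_exp_neg_mul_abs hc).const_mul C).mono'
    (hXcont.mul (continuous_smoothingKernel_line hγ hT.ne' hσ hσ0)).aestronglyMeasurable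
    (.of_forall fun u => ?_)
  have hCu := hC (σ + u * I) (re_add_mul_I σ u)
  rwa [Real.norm_of_nonneg (Real.exp_pos _).le, Complex.add_im, Complex.ofReal_im, zero_add,
    Complex.im_ofReal_mul, Complex.I_im, mul_one] at hCu

lemma hasMellin_exp_neg_div_rpow {γ T : ℝ} (hγ : 0 < γ) (hT : 0 < T) {z : ℂ} (hz : 0 < z.re) :
    HasMellin (fun x : ℝ => (Real.exp (-(x / T) ^ γ) : ℂ)) z
      ((γ : ℂ)⁻¹ * smoothingKernel γ T z) := by
  have hre : 0 < (z / γ).re := by rw [Complex.div_ofReal_re]; exact div_pos hz hγ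
  have hexp : MellinConvergent (fun x : ℝ => (Real.exp (-x) : ℂ)) (z / γ) := by
    refine (Complex.GammaIntegral_convergent hre).congr_fun (fun x _ => ?_) measurableSet_Ioi
    rw [smul_eq_mul, mul_comm]
  have hrpow : MellinConvergent (fun x : ℝ => (Real.exp (-x ^ γ) : ℂ)) z :=
    (MellinConvergent.comp_rpow (f := fun x : ℝ => (Real.exp (-x) : ℂ)) hγ.ne').mpr hexp
  simp_rw [div_eq_inv_mul _ T]
  refine ⟨(MellinConvergent.comp_mul_left (f := fun x : ℝ => (Real.exp (-x ^ γ) : ℂ))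
    (inv_pos.mpr hT)).mpr hrpow, ?_⟩
  rw [mellin_comp_mul_left (fun x : ℝ => (Real.exp (-x ^ γ) : ℂ)) z (inv_pos.mpr hT),
    mellin_comp_rpow (fun x : ℝ => (Real.exp (-x) : ℂ)) z γ, abs_of_pos hγ,
    ← Complex.GammaIntegral_eq_mellin, ← Complex.Gamma_eq_integral hre, Complex.ofReal_inv,
    Complex.inv_cpow_ofReal_nonneg hT.le, Complex.cpow_neg, inv_inv, Complex.real_smul,
    Complex.ofReal_inv, smul_eq_mul, smoothingKernel, mul_left_comm]

lemma integrable_smoothingKernel {γ T σ : ℝ} (hγ : 0 < γ) (hT : 0 < T) (hσ : 0 < σ) :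
    Integrable fun u : ℝ => smoothingKernel γ T (σ + u * I) := by
  have hone : SubexpOn (fun _ => 1) (Complex.re ⁻¹' {σ}) :=
    subexpOn_of_norm_le_rpow (A := 1) zero_lt_one fun s _ => by
      rw [norm_one, one_mul, Real.rpow_one]
      exact le_add_of_nonneg_right (abs_nonneg _)
  simpa only [one_mul] using
    integrable_mul_smoothingKernel hγ hT (by linarith) hσ.ne' hone continuous_const

theorem exp_neg_div_rpow_eq_integral {γ T σ y : ℝ} (hγ : 0 < γ) (hT : 0 < T) (hσ : 0 < σ)
    (hy : 0 < y) :
    (Real.exp (-(y / T) ^ γ) : ℂ) = 1 / (2 * π * γ) *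
      ∫ u : ℝ, (y : ℂ) ^ (-(σ + u * I)) * smoothingKernel γ T (σ + u * I) := by
  have hmellin (u : ℝ) := (hasMellin_exp_neg_div_rpow hγ hT
    (by rwa [re_add_mul_I] : 0 < ((σ : ℂ) + u * I).re)).2
  have hinv := mellinInv_mellin_eq σ (fun x : ℝ => (Real.exp (-(x / T) ^ γ) : ℂ)) hy
    (hasMellin_exp_neg_div_rpow hγ hT hσ).1 ?_ ?_
  · rw [← hinv, mellinInv]
    simp_rw [hmellin, smul_eq_mul, mul_left_comm _ (γ : ℂ)⁻¹]
    rw [integral_const_mul, Complex.real_smul]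
    push_cast
    ring
  · rw [Complex.VerticalIntegrable]
    simp_rw [hmellin]
    exact (integrable_smoothingKernel hγ hT hσ).const_mul _
  · have : ContinuousAt (fun x : ℝ => (x / T) ^ γ) y :=
      (continuousAt_id.div_const T).rpow_const (Or.inl (div_pos hy hT).ne')
    fun_prop

lemma tendsto_integral_horizontal {g : ℂ → ℂ} {b c : ℝ} (hbc : b ≤ c)
    (hg : Tendsto g (comap (fun z => |z.im|) atTop ⊓ 𝓟 (Complex.re ⁻¹' Icc b c)) (𝓝 0)) :
    Tendsto (fun v : ℝ => ∫ x in b..c, g (x + v * I)) (comap (fun v : ℝ => |v|) atTop) (𝓝 0) := by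
  refine Metric.tendsto_nhds.mpr fun ε hε => ?_
  have hη : 0 < ε / (|c - b| + 1) := by positivity
  have hsmall : ∀ᶠ v : ℝ in comap (fun v : ℝ => |v|) atTop, ∀ z : ℂ, |z.im| = |v| →
      z ∈ Complex.re ⁻¹' Icc b c → ‖g z‖ < ε / (|c - b| + 1) :=
    tendsto_comap.eventually <| eventually_comap.mp <| eventually_inf_principal.mp <|
      (Metric.tendsto_nhds.mp hg _ hη).mono fun z hz => by rwa [dist_zero_right] at hz
  filter_upwards [hsmall] with v hv
  have hle : ‖∫ x in b..c, g (x + v * I)‖ ≤ ε / (|c - b| + 1) * |c - b| := by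
    refine intervalIntegral.norm_integral_le_of_norm_le_const fun x hx => (hv _ ?_ ?_).le
    · simp only [Complex.add_im, Complex.ofReal_im, Complex.im_ofReal_mul, Complex.I_im, mul_one,
        zero_add]
    · rw [uIoc_of_le hbc] at hx
      rw [mem_preimage, re_add_mul_I]
      exact Ioc_subset_Icc_self hx
  rw [dist_zero_right]
  refine hle.trans_lt ?_
  rw [div_mul_eq_mul_div, div_lt_iff₀ (by positivity)]
  nlinarith

theorem tendsto_integral_vertical_sub {g : ℂ → ℂ} {b c : ℝ} (hbc : b ≤ c)
    (hg : DifferentiableOn ℂ g (Complex.re ⁻¹' Icc b c))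
    (hg0 : Tendsto g (comap (fun z => |z.im|) atTop ⊓ 𝓟 (Complex.re ⁻¹' Icc b c)) (𝓝 0)) :
    Tendsto (fun U : ℝ => (∫ u in (-U)..U, g (c + u * I)) - ∫ u in (-U)..U, g (b + u * I))
      atTop (𝓝 0) := by
  have hcauchy (U : ℝ) : (∫ u in (-U)..U, g (c + u * I)) - ∫ u in (-U)..U, g (b + u * I) =
      I * ((∫ x in b..c, g (x + (-U : ℝ) * I)) - ∫ x in b..c, g (x + U * I)) := by
    have hrect := Complex.integral_boundary_rect_eq_zero_of_differentiableOn g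
      (b + (-U : ℝ) * I) (c + U * I) (hg.mono fun z hz => ?_)
    · simp only [Complex.add_re, Complex.add_im, Complex.ofReal_re, Complex.ofReal_im,
        Complex.re_ofReal_mul, Complex.im_ofReal_mul, Complex.I_re, Complex.I_im, mul_zero, mul_one,
        add_zero, zero_add, smul_eq_mul] at hrect
      linear_combination -I * hrect + ((∫ u in (-U)..U, g (c + u * I)) -
        ∫ u in (-U)..U, g (b + u * I)) * Complex.I_sq
    · simpa only [re_add_mul_I, uIcc_of_le hbc] using hz.1
  have hhor := tendsto_integral_horizontal hbc hg0
  have htop := hhor.comp (tendsto_comap_iff.mpr tendsto_abs_atTop_atTop)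
  have hbot := (hhor.comp (tendsto_comap_iff.mpr tendsto_abs_atBot_atTop)).comp
    tendsto_neg_atTop_atBot
  simp_rw [hcauchy]
  simpa only [Function.comp_def, sub_zero, mul_zero] using (hbot.sub htop).const_mul I

lemma intervalIntegral_inv_add_mul_I {a : ℝ} (ha : a ≠ 0) (U : ℝ) :
    ∫ u in (-U)..U, ((a : ℂ) + u * I)⁻¹ =
      2 * (Real.arctan (U / a) : ℝ) := by
  have hderiv (u : ℝ) : HasDerivAt (fun u : ℝ => (Real.arctan (u / a) : ℂ) -
      I / 2 * (Real.log (a ^ 2 + u ^ 2) : ℂ)) ((a : ℂ) + u * I)⁻¹ u := by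
    have hsq : a ^ 2 + u ^ 2 ≠ 0 := by positivity
    have harctan := ((hasDerivAt_id u).div_const a).arctan.ofReal_comp
    have hlog := (((hasDerivAt_pow 2 u).const_add (a ^ 2)).log hsq).ofReal_comp
    refine (harctan.sub (hlog.const_mul (I / 2))).congr_deriv ?_
    have hre : (1 / (1 + (u / a) ^ 2) * (1 / a) : ℝ) = a / (a ^ 2 + u ^ 2) := by field_simp
    have hne : (a : ℂ) + u * I ≠ 0 := add_mul_I_ne_zero ha u
    have hsq' : (a : ℂ) ^ 2 + (u : ℂ) ^ 2 ≠ 0 := mod_cast hsq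
    simp only [id_eq]
    rw [hre]
    push_cast
    field_simp
    linear_combination -(u : ℂ) ^ 2 * Complex.I_sq
  rw [intervalIntegral.integral_eq_sub_of_hasDerivAt fun u _ => hderiv u]
  · rw [neg_div, Real.arctan_neg, neg_sq]
    push_cast
    ring
  · exact (Continuous.inv₀ (by fun_prop) (add_mul_I_ne_zero ha)).intervalIntegrable _ _

lemma tendsto_intervalIntegral_inv_add_mul_I {a : ℝ} (ha : a ≠ 0) :
    Tendsto (fun U : ℝ => ∫ u in (-U)..U, ((a : ℂ) + u * I)⁻¹) atTop (𝓝 (a.sign * π)) := by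
  have harctan : Tendsto (fun U : ℝ => Real.arctan (U / a)) atTop (𝓝 (a.sign * (π / 2))) := by
    rcases ha.lt_or_gt with hneg | hpos
    · rw [Real.sign_of_neg hneg, neg_one_mul]
      exact (tendsto_arctan_atBot.mono_right nhdsWithin_le_nhds).comp
        (tendsto_id.atTop_div_const_of_neg hneg)
    · rw [Real.sign_of_pos hpos, one_mul]
      exact (tendsto_arctan_atTop.mono_right nhdsWithin_le_nhds).comp
        (tendsto_id.atTop_div_const hpos)
  simp_rw [intervalIntegral_inv_add_mul_I ha]
  have hlim : 2 * ((a.sign * (π / 2) : ℝ) : ℂ) = a.sign * π := by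
    push_cast
    ring
  exact hlim ▸ ((Complex.continuous_ofReal.tendsto _).comp harctan).const_mul 2

lemma tendsto_dslope_zero_strip {f : ℂ → ℂ} {S : Set ℂ} (hf : f =O[𝓟 S] fun _ => (1 : ℝ)) :
    Tendsto (dslope f 0) (comap (fun z => |z.im|) atTop ⊓ 𝓟 S) (𝓝 0) := by
  obtain ⟨K, hK⟩ := isBigO_principal.mp hf
  have hlim : Tendsto (fun z : ℂ => (K + ‖f 0‖) / |z.im|)
      (comap (fun z => |z.im|) atTop ⊓ 𝓟 S) (𝓝 0) :=
    ((tendsto_id.const_div_atTop _).comp tendsto_comap).mono_left inf_le_left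
  refine squeeze_zero_norm' ?_ hlim
  have hpos : ∀ᶠ z : ℂ in comap (fun z => |z.im|) atTop, 0 < |z.im| :=
    tendsto_comap.eventually (eventually_gt_atTop 0)
  refine eventually_inf_principal.mpr (hpos.mono fun z hz hzS => ?_)
  have hz0 : z ≠ 0 := by
    rintro rfl
    simp only [Complex.zero_im, abs_zero, lt_self_iff_false] at hz
  rw [dslope_of_ne _ hz0, slope_def_field, sub_zero, norm_div]
  have hKz := hK z hzS
  rw [norm_one, mul_one] at hKz
  exact div_le_div₀ (add_nonneg ((norm_nonneg _).trans hKz) (norm_nonneg _))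
    ((norm_sub_le _ _).trans (by gcongr)) hz (Complex.abs_im_le_norm z)

lemma tendsto_integral_dslope_vertical {f : ℂ → ℂ} {a : ℝ} (ha : a ≠ 0)
    (hf : Integrable fun u : ℝ => f (a + u * I) / (a + u * I)) :
    Tendsto (fun U : ℝ => ∫ u in (-U)..U, dslope f 0 (a + u * I)) atTop
      (𝓝 ((∫ u : ℝ, f (a + u * I) / (a + u * I)) - f 0 * (a.sign * π))) := by
  have hcont : Continuous fun u : ℝ => ((a : ℂ) + u * I)⁻¹ :=
    Continuous.inv₀ (by fun_prop) (add_mul_I_ne_zero ha)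
  have hsplit (U : ℝ) : ∫ u in (-U)..U, dslope f 0 (a + u * I) =
      (∫ u in (-U)..U, f (a + u * I) / (a + u * I)) -
        f 0 * ∫ u in (-U)..U, ((a : ℂ) + u * I)⁻¹ := by
    rw [← intervalIntegral.integral_const_mul, ← intervalIntegral.integral_sub
      hf.intervalIntegrable ((hcont.const_mul _).intervalIntegrable _ _)]
    refine intervalIntegral.integral_congr fun u _ => ?_
    rw [dslope_of_ne _ (add_mul_I_ne_zero ha u), slope_def_field, sub_zero, sub_div,
      ← div_eq_mul_inv]
  simp_rw [hsplit]
  exact (intervalIntegral_tendsto_integral hf tendsto_neg_atTop_atBot tendsto_id).sub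
    ((tendsto_intervalIntegral_inv_add_mul_I ha).const_mul _)

theorem integral_vertical_div_sub_integral_vertical_div {f : ℂ → ℂ} {b c : ℝ} (hb : b < 0)
    (hc : 0 < c) (hf : DifferentiableOn ℂ f (Complex.re ⁻¹' Icc b c))
    (hbdd : f =O[𝓟 (Complex.re ⁻¹' Icc b c)] fun _ => (1 : ℝ))
    (hfb : Integrable fun u : ℝ => f (b + u * I) / (b + u * I))
    (hfc : Integrable fun u : ℝ => f (c + u * I) / (c + u * I)) :
    (∫ u : ℝ, f (c + u * I) / (c + u * I)) - ∫ u : ℝ, f (b + u * I) / (b + u * I) =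
      2 * π * f 0 := by
  have hnhds : Complex.re ⁻¹' Icc b c ∈ 𝓝 (0 : ℂ) :=
    Complex.continuous_re.continuousAt (Icc_mem_nhds hb hc)
  have hshift := tendsto_integral_vertical_sub (hb.trans hc).le
    ((Complex.differentiableOn_dslope hnhds).mpr hf) (tendsto_dslope_zero_strip hbdd)
  have hlines := (tendsto_integral_dslope_vertical hc.ne' hfc).sub
    (tendsto_integral_dslope_vertical hb.ne hfb)
  have heq := tendsto_nhds_unique hlines hshift
  rw [Real.sign_of_pos hc, Real.sign_of_neg hb] at heq
  push_cast at heq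
  linear_combination heq

theorem integral_mul_smoothingKernel_sub {γ T b c : ℝ} {G : ℂ → ℂ} (hT : 0 < T) (hγb : -γ < b)
    (hb : b < 0) (hc : 0 < c) (hG : DifferentiableOn ℂ G (Complex.re ⁻¹' Icc b c))
    (hGexp : SubexpOn G (Complex.re ⁻¹' Icc b c)) :
    (∫ u : ℝ, G (c + u * I) * smoothingKernel γ T (c + u * I)) -
      ∫ u : ℝ, G (b + u * I) * smoothingKernel γ T (b + u * I) = 2 * π * γ * G 0 := by
  have hγ : 0 < γ := by linarith
  have hreg := isBigO_regularizedKernel hγ hT hγb c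
  set f : ℂ → ℂ := fun ξ => G ξ * (γ * regularizedKernel γ T ξ) with hf_def
  have hf : DifferentiableOn ℂ f (Complex.re ⁻¹' Icc b c) :=
    hG.mul (((differentiableOn_regularizedKernel hγ hT.ne').mono
      fun ξ hξ => hγb.trans_le hξ.1).const_mul _)
  have hbdd : f =O[𝓟 (Complex.re ⁻¹' Icc b c)] fun _ => (1 : ℝ) := by
    refine ((hGexp (1 / γ) (by positivity)).mul (hreg.const_mul_left (γ : ℂ))).congr_right
      fun ξ => ?_
    rw [← Real.exp_add, one_div_mul_eq_div, add_neg_cancel, Real.exp_zero]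
  have hline (a : ℝ) (ha : a ≠ 0) (u : ℝ) : G (a + u * I) * smoothingKernel γ T (a + u * I) =
      f (a + u * I) / (a + u * I) := by
    rw [smoothingKernel_eq_div hγ.ne' T (add_mul_I_ne_zero ha u), mul_div_assoc']
  have hint (a : ℝ) (ha : a ≠ 0) (hmem : a ∈ Icc b c) :
      Integrable fun u : ℝ => f (a + u * I) / (a + u * I) := by
    simp_rw [← hline a ha]
    refine integrable_mul_smoothingKernel hγ hT (hγb.trans_le hmem.1) ha
      (hGexp.mono (preimage_mono (singleton_subset_iff.mpr hmem)))
      (hG.continuousOn.comp_continuous (by fun_prop) fun u => by rwa [mem_preimage, re_add_mul_I])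
  simp_rw [hline c hc.ne', hline b hb.ne]
  rw [integral_vertical_div_sub_integral_vertical_div hb hc hf hbdd
    (hint b hb.ne (left_mem_Icc.mpr (hb.trans hc).le))
    (hint c hc.ne' (right_mem_Icc.mpr (hb.trans hc).le)), hf_def]
  simp only [regularizedKernel_zero]
  ring

/-- The weight attached to the dual sum when the functional equation `F s = X s * F (1 - s)` is
applied on the line `Re s = Re s₀ + b`: the contour integral
`(2πiγ)⁻¹ ∫ y ^ ξ * X (s₀ + ξ) * T ^ ξ * Γ(ξ / γ) dξ` over `Re ξ = b`, parametrized by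
`ξ = b + iu`. -/
noncomputable def dualWeight (X : ℂ → ℂ) (s₀ : ℂ) (γ T b y : ℝ) : ℂ :=
  1 / (2 * π * γ) * ∫ u : ℝ, (y : ℂ) ^ ((b : ℂ) + u * I) *
    (X (s₀ + (b + u * I)) * smoothingKernel γ T (b + u * I))

section DirichletSeries

variable {ι : Type*} {a : ι → ℂ} {x : ι → ℝ} {F X : ℂ → ℂ} {σ₀ γ T b : ℝ} {s₀ : ℂ}

theorem tsum_mul_integral_cpow [Countable ι] (hx : ∀ i, 0 < x i) {w : ℂ} {σ : ℝ} {s K : ℝ → ℂ}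
    (ha : Summable fun i => ‖a i * (x i : ℂ) ^ (-(w + σ))‖) (hs : Continuous s)
    (hre : ∀ u, (s u).re = σ) (hK : Integrable K) :
    (Summable fun i => ‖a i * (x i : ℂ) ^ (-w) * ∫ u, (x i : ℂ) ^ (-s u) * K u‖) ∧
      ∑' i, a i * (x i : ℂ) ^ (-w) * ∫ u, (x i : ℂ) ^ (-s u) * K u =
        ∫ u, (∑' i, a i * (x i : ℂ) ^ (-(w + s u))) * K u := by
  have hx0 (i : ι) : (x i : ℂ) ≠ 0 := Complex.ofReal_ne_zero.mpr (hx i).ne'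
  have hnorm (i : ι) (u : ℝ) : ‖a i * (x i : ℂ) ^ (-(w + s u))‖ =
      ‖a i * (x i : ℂ) ^ (-(w + σ))‖ := by
    simp only [norm_mul, Complex.norm_cpow_eq_rpow_re_of_pos (hx i), Complex.neg_re, Complex.add_re,
      hre, Complex.ofReal_re]
  have hterm (i : ι) : a i * (x i : ℂ) ^ (-w) * ∫ u, (x i : ℂ) ^ (-s u) * K u =
      ∫ u, a i * (x i : ℂ) ^ (-(w + s u)) * K u := by
    rw [← integral_const_mul]
    refine integral_congr_ae (.of_forall fun u => ?_)
    simp only [neg_add, Complex.cpow_add _ _ (hx0 i), mul_assoc]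
  have hint (i : ι) : Integrable fun u => a i * (x i : ℂ) ^ (-(w + s u)) * K u := by
    have hcont : Continuous fun u => a i * (x i : ℂ) ^ (-(w + s u)) :=
      (Continuous.const_cpow (by fun_prop) (Or.inl (hx0 i))).const_mul _
    exact hK.bdd_mul hcont.aestronglyMeasurable (.of_forall fun u => (hnorm i u).le)
  have hsum : Summable fun i => ∫ u, ‖a i * (x i : ℂ) ^ (-(w + s u)) * K u‖ := by
    simp_rw [norm_mul _ (K _), hnorm, integral_const_mul]
    exact ha.mul_right _
  simp_rw [hterm]
  refine ⟨hsum.of_nonneg_of_le (fun _ => norm_nonneg _) fun i => norm_integral_le_integral_norm _,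
    ?_⟩
  rw [(hasSum_integral_of_summable_integral_norm hint hsum).tsum_eq]
  simp_rw [tsum_mul_right]

lemma tsum_exp_neg_div_rpow [Countable ι] (hx : ∀ i, 0 < x i) (hγ : 0 < γ) (hT : 0 < T)
    (hF : ∀ s : ℂ, σ₀ < s.re →
      Summable (fun i => ‖a i * (x i : ℂ) ^ (-s)‖) ∧ F s = ∑' i, a i * (x i : ℂ) ^ (-s))
    {c : ℝ} (hc : 0 < c) (hσ₀ : σ₀ < s₀.re + c) :
    (Summable fun i => ‖a i * (x i : ℂ) ^ (-s₀) * (Real.exp (-(x i / T) ^ γ) : ℂ)‖) ∧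
      ∑' i, a i * (x i : ℂ) ^ (-s₀) * (Real.exp (-(x i / T) ^ γ) : ℂ) =
        1 / (2 * π * γ) * ∫ u : ℝ, F (s₀ + (c + u * I)) * smoothingKernel γ T (c + u * I) := by
  have hline (z : ℂ) (hz : z.re = c) : σ₀ < (s₀ + z).re := by rwa [Complex.add_re, hz]
  obtain ⟨hsum, htsum⟩ := tsum_mul_integral_cpow hx (hF _ (hline c (Complex.ofReal_re c))).1
    (s := fun u : ℝ => c + u * I) (by fun_prop) (re_add_mul_I c)
    (integrable_smoothingKernel hγ hT hc)
  simp_rw [exp_neg_div_rpow_eq_integral hγ hT hc (hx _), mul_left_comm _ (1 / (2 * π * γ : ℂ))]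
  refine ⟨by simpa only [norm_mul] using hsum.mul_left ‖(1 / (2 * π * γ) : ℂ)‖, ?_⟩
  rw [tsum_mul_left, htsum]
  simp_rw [← (hF _ (hline _ (re_add_mul_I c _))).2]

lemma tsum_mul_dualWeight [Countable ι] (hx : ∀ i, 0 < x i)
    (hF : ∀ s : ℂ, σ₀ < s.re →
      Summable (fun i => ‖a i * (x i : ℂ) ^ (-s)‖) ∧ F s = ∑' i, a i * (x i : ℂ) ^ (-s))
    (hσ₀ : σ₀ < 1 - (s₀.re + b))
    (hX : Integrable fun u : ℝ => X (s₀ + (b + u * I)) * smoothingKernel γ T (b + u * I)) :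
    (Summable fun i => ‖a i * (x i : ℂ) ^ (-(1 - s₀)) * dualWeight X s₀ γ T b (x i)‖) ∧
      ∑' i, a i * (x i : ℂ) ^ (-(1 - s₀)) * dualWeight X s₀ γ T b (x i) =
        1 / (2 * π * γ) * ∫ u : ℝ, F (1 - (s₀ + (b + u * I))) *
          (X (s₀ + (b + u * I)) * smoothingKernel γ T (b + u * I)) := by
  have hline (z : ℂ) (hz : z.re = -b) : σ₀ < (1 - s₀ + z).re := by
    rw [Complex.add_re, Complex.sub_re, Complex.one_re, hz]
    linarith
  have hre (u : ℝ) : (-((b : ℂ) + u * I)).re = -b := by rw [Complex.neg_re, re_add_mul_I]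
  obtain ⟨hsum, htsum⟩ := tsum_mul_integral_cpow hx
    (hF _ (hline (-b : ℝ) (Complex.ofReal_re _))).1 (s := fun u : ℝ => -(b + u * I))
    (by fun_prop) hre hX
  simp_rw [neg_neg] at hsum htsum
  simp_rw [dualWeight, mul_left_comm _ (1 / (2 * π * γ : ℂ))]
  refine ⟨by simpa only [norm_mul] using hsum.mul_left ‖(1 / (2 * π * γ) : ℂ)‖, ?_⟩
  rw [tsum_mul_left, htsum]
  simp_rw [← (hF _ (hline _ (hre _))).2, ← sub_eq_add_neg, sub_sub]

lemma integral_const_add_mul_smoothingKernel_sub {c : ℝ} (hT : 0 < T) (hγb : -γ < b) (hb : b < 0)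
    (hc : 0 < c) (hF : Differentiable ℂ F)
    (hFexp : SubexpOn F (Complex.re ⁻¹' Icc (s₀.re + b) (s₀.re + c))) :
    (∫ u : ℝ, F (s₀ + (c + u * I)) * smoothingKernel γ T (c + u * I)) -
      ∫ u : ℝ, F (s₀ + (b + u * I)) * smoothingKernel γ T (b + u * I) = 2 * π * γ * F s₀ := by
  have hFstrip : SubexpOn (fun ξ => F (s₀ + ξ)) (Complex.re ⁻¹' Icc b c) :=
    (hFexp.comp_const_add s₀).mono fun ξ hξ => by
      rw [mem_preimage, mem_preimage, Complex.add_re]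
      exact ⟨by linarith [hξ.1], by linarith [hξ.2]⟩
  simpa only [add_zero] using integral_mul_smoothingKernel_sub (G := fun ξ => F (s₀ + ξ))
    hT hγb hb hc (hF.comp (differentiable_id.const_add s₀)).differentiableOn hFstrip

theorem tsum_exp_neg_div_rpow_eq_add_tsum_dualWeight [Countable ι] (hx : ∀ i, 0 < x i)
    (hT : 0 < T) (hγb : -γ < b) (hb : b < 0) (hFdiff : Differentiable ℂ F)
    (hFexp : ∀ σ₁ σ₂ : ℝ, σ₁ < σ₂ → SubexpOn F (Complex.re ⁻¹' Icc σ₁ σ₂))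
    (hF : ∀ s : ℂ, σ₀ < s.re →
      Summable (fun i => ‖a i * (x i : ℂ) ^ (-s)‖) ∧ F s = ∑' i, a i * (x i : ℂ) ^ (-s))
    (hσ₀ : σ₀ < 1 - (s₀.re + b)) (hXexp : SubexpOn X (Complex.re ⁻¹' {s₀.re + b}))
    (hXcont : ContinuousOn X (Complex.re ⁻¹' {s₀.re + b}))
    (hfe : ∀ᵐ u : ℝ, F (s₀ + (b + u * I)) = X (s₀ + (b + u * I)) * F (1 - (s₀ + (b + u * I)))) :
    (Summable fun i => ‖a i * (x i : ℂ) ^ (-s₀) * (Real.exp (-(x i / T) ^ γ) : ℂ)‖) ∧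
      (Summable fun i => ‖a i * (x i : ℂ) ^ (-(1 - s₀)) * dualWeight X s₀ γ T b (x i)‖) ∧
      ∑' i, a i * (x i : ℂ) ^ (-s₀) * (Real.exp (-(x i / T) ^ γ) : ℂ) =
        F s₀ + ∑' i, a i * (x i : ℂ) ^ (-(1 - s₀)) * dualWeight X s₀ γ T b (x i) := by
  have hγ : 0 < γ := by linarith
  obtain ⟨c, hc, hcσ⟩ : ∃ c : ℝ, 0 < c ∧ σ₀ < s₀.re + c :=
    ⟨|σ₀ - s₀.re| + 1, by positivity, by linarith [le_abs_self (σ₀ - s₀.re)]⟩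
  have hmem (u : ℝ) : s₀ + (b + u * I) ∈ Complex.re ⁻¹' {s₀.re + b} := by
    rw [mem_preimage, mem_singleton_iff, Complex.add_re, re_add_mul_I]
  have hXline : SubexpOn (fun ξ => X (s₀ + ξ)) (Complex.re ⁻¹' {b}) :=
    (hXexp.comp_const_add s₀).mono fun ξ hξ => by
      rw [mem_preimage, mem_preimage, mem_singleton_iff, Complex.add_re, hξ]
  have hXint := integrable_mul_smoothingKernel hγ hT hγb hb.ne hXline
    (hXcont.comp_continuous (by fun_prop) hmem)
  obtain ⟨hsum, htsum⟩ := tsum_exp_neg_div_rpow hx hγ hT hF hc hcσ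
  obtain ⟨hsumDual, htsumDual⟩ := tsum_mul_dualWeight hx hF hσ₀ hXint
  have hdual : ∫ u : ℝ, F (1 - (s₀ + (b + u * I))) *
      (X (s₀ + (b + u * I)) * smoothingKernel γ T (b + u * I)) =
      ∫ u : ℝ, F (s₀ + (b + u * I)) * smoothingKernel γ T (b + u * I) :=
    integral_congr_ae (hfe.mono fun u hu => by simp only [hu]; ring)
  have hshift := integral_const_add_mul_smoothingKernel_sub hT hγb hb hc hFdiff
    (hFexp (s₀.re + b) (s₀.re + c) (by linarith))
  refine ⟨hsum, hsumDual, ?_⟩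
  rw [htsum, htsumDual, hdual, sub_eq_iff_eq_add.mp hshift]
  rw [mul_add, ← mul_assoc, one_div_mul_cancel, one_mul]
  exact mod_cast (by positivity : 2 * π * γ ≠ 0)

end DirichletSeries

lemma norm_cos_le_exp (z : ℂ) : ‖Complex.cos z‖ ≤ Real.exp |z.im| := by
  have hadd := norm_add_le (Complex.exp (z * I)) (Complex.exp (-z * I))
  simp only [Complex.norm_exp, Complex.mul_I_re, Complex.neg_im, neg_neg] at hadd
  rw [Complex.cos, norm_div, Complex.norm_ofNat, div_le_iff₀ two_pos]
  linarith [Real.exp_le_exp.mpr (le_abs_self z.im), Real.exp_le_exp.mpr (neg_le_abs z.im)]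

/-- The archimedean factor of parity `a` in a degree-one functional equation
`F w = gammaFactor a w * F (1 - w)`, written with Deligne's `Gammaℝ`. -/
noncomputable def gammaFactor (a w : ℂ) : ℂ :=
  Gammaℝ (1 - w + a) / Gammaℝ (w + a)

lemma gammaFactor_eq_cpow_mul (a w : ℂ) : gammaFactor a w =
    (π : ℂ) ^ (w - 1 / 2) * (Complex.Gamma ((1 - w + a) / 2) / Complex.Gamma ((w + a) / 2)) := by
  have hpow : (π : ℂ) ^ (w - 1 / 2) = (π : ℂ) ^ (-(1 - w + a) / 2) / (π : ℂ) ^ (-(w + a) / 2) := by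
    rw [← Complex.cpow_sub _ _ (Complex.ofReal_ne_zero.mpr Real.pi_ne_zero)]
    congr 1
    ring
  rw [gammaFactor, Complex.Gammaℝ_def, Complex.Gammaℝ_def, mul_div_mul_comm, hpow]

lemma gammaFactor_eq_Gammaℂ_mul_cos {a w : ℂ} (ha : a = 0 ∨ a = 1) (hw : w.re < 1) :
    gammaFactor a w = Gammaℂ (1 - w) * Complex.cos (π * (1 - w - a) / 2) := by
  have hre : 0 < (1 - w).re := by rw [Complex.sub_re, Complex.one_re]; linarith
  have hpole (n : ℕ) : 1 - w ≠ -n := by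
    intro h
    rw [h, Complex.neg_re, Complex.natCast_re, neg_pos] at hre
    exact hre.not_ge n.cast_nonneg
  rcases ha with rfl | rfl
  · have hinv := Complex.inv_Gammaℝ_one_sub hpole
    rw [sub_sub_cancel] at hinv
    rw [gammaFactor, add_zero, add_zero, sub_zero, div_eq_mul_inv, hinv, mul_comm,
      inv_mul_cancel_right₀ (Complex.Gammaℝ_ne_zero_of_re_pos hre)]
  · have hinv := Complex.inv_Gammaℝ_two_sub hpole
    rw [show 2 - (1 - w) = w + 1 by ring] at hinv
    have hre' : 0 < (1 - w + 1).re := by rw [Complex.add_re, Complex.one_re]; linarith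
    rw [gammaFactor, div_eq_mul_inv, hinv, mul_comm,
      inv_mul_cancel_right₀ (Complex.Gammaℝ_ne_zero_of_re_pos hre'),
      ← Complex.cos_sub_pi_div_two]
    congr 2
    ring

lemma continuousOn_gammaFactor {a : ℂ} (ha : a = 0 ∨ a = 1) :
    ContinuousOn (gammaFactor a) (Complex.re ⁻¹' Iio 1) := by
  refine ContinuousOn.congr (fun w hw => ?_) fun w hw => gammaFactor_eq_Gammaℂ_mul_cos ha hw
  have hre : 0 < (1 - w).re := by rw [Complex.sub_re, Complex.one_re]; exact sub_pos.mpr hw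
  have hΓ : ContinuousAt (fun w : ℂ => Complex.Gamma (1 - w)) w :=
    ContinuousAt.comp (f := fun w : ℂ => 1 - w)
      (differentiableAt_Gamma_of_re_pos hre).continuousAt (by fun_prop)
  have hpow : Continuous fun w : ℂ => (2 * π : ℂ) ^ (-(1 - w)) :=
    Continuous.const_cpow (by fun_prop) (Or.inl (by exact mod_cast Real.two_pi_pos.ne'))
  have hcos : Continuous fun w : ℂ => Complex.cos (π * (1 - w - a) / 2) := by fun_prop
  exact (((hpow.continuousAt.const_mul _).mul hΓ).mul hcos.continuousAt).continuousWithinAt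

lemma isBigO_Gammaℂ_one_sub {σ₁ σ₂ θ : ℝ} (hσ₂ : σ₂ < 1) (hθ : θ < π / 2) :
    (fun w : ℂ => Gammaℂ (1 - w)) =O[𝓟 (Complex.re ⁻¹' Icc σ₁ σ₂)]
      fun w => Real.exp (-(θ * |w.im|)) := by
  have hmap : Tendsto (fun w : ℂ => 1 - w) (𝓟 (Complex.re ⁻¹' Icc σ₁ σ₂))
      (𝓟 (Complex.re ⁻¹' Icc (1 - σ₂) (1 - σ₁))) :=
    tendsto_principal_principal.mpr fun w hw => by
      rw [mem_preimage, Complex.sub_re, Complex.one_re]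
      exact ⟨by linarith [hw.2], by linarith [hw.1]⟩
  have hΓ := (isBigO_Gamma_strip (σ₂ := 1 - σ₁) (sub_pos.mpr hσ₂) hθ).comp_tendsto hmap
  have hpow : (fun w : ℂ => (2 * π : ℂ) ^ (-(1 - w))) =O[𝓟 (Complex.re ⁻¹' Icc σ₁ σ₂)]
      fun _ => (1 : ℝ) := by
    have hcpow := isBigO_cpow_strip Real.two_pi_pos σ₁ σ₂
    push_cast at hcpow
    refine (hcpow.const_mul_left (2 * π : ℂ)⁻¹).congr_left fun w => ?_
    rw [neg_sub, Complex.cpow_sub _ _ (by exact mod_cast Real.two_pi_pos.ne'), Complex.cpow_one,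
      div_eq_inv_mul]
  refine ((hpow.const_mul_left 2).mul hΓ).congr_right fun w => ?_
  rw [Function.comp_apply, Complex.sub_im, Complex.one_im, zero_sub, abs_neg, one_mul]

lemma subexpOn_gammaFactor {a : ℂ} (ha : a = 0 ∨ a = 1) {σ₁ σ₂ : ℝ} (hσ₂ : σ₂ < 1) :
    SubexpOn (gammaFactor a) (Complex.re ⁻¹' Icc σ₁ σ₂) := by
  refine SubexpOn.congr (fun δ hδ => ?_) fun w hw =>
    (gammaFactor_eq_Gammaℂ_mul_cos ha (hw.2.trans_lt hσ₂)).symm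
  have hcos : (fun w : ℂ => Complex.cos (π * (1 - w - a) / 2)) =O[𝓟 (Complex.re ⁻¹' Icc σ₁ σ₂)]
      fun w => Real.exp (π / 2 * |w.im|) := by
    refine isBigO_principal.mpr ⟨1, fun w _ => ?_⟩
    have him : |((π : ℂ) * (1 - w - a) / 2).im| = π / 2 * |w.im| := by
      have ha_im : a.im = 0 := by rcases ha with rfl | rfl <;> rfl
      rw [Complex.div_ofNat_im, Complex.im_ofReal_mul, Complex.sub_im, Complex.sub_im,
        Complex.one_im, ha_im, sub_zero, zero_sub, mul_neg, neg_div, abs_neg, mul_div_right_comm,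
        abs_mul, abs_of_pos Real.pi_div_two_pos]
    rw [one_mul, Real.norm_of_nonneg (Real.exp_pos _).le, ← him]
    exact norm_cos_le_exp _
  have hΓ := isBigO_Gammaℂ_one_sub (σ₁ := σ₁) hσ₂ (sub_lt_self (π / 2) hδ)
  refine (hΓ.mul hcos).congr_right fun w => ?_
  rw [← Real.exp_add]
  congr 1
  ring

lemma parity_eq_zero_or_one {ε : ℝ} (hε : ε = 1 ∨ ε = -1) :
    (1 - (ε : ℂ)) / 2 = 0 ∨ (1 - (ε : ℂ)) / 2 = 1 := by
  rcases hε with rfl | rfl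
  · exact Or.inl (by rw [Complex.ofReal_one, sub_self, zero_div])
  · exact Or.inr (by push_cast; norm_num)

lemma chiFactor_eq_gammaFactor_mul (κ ε : ℝ) (s : ℂ) : chiFactor κ ε s =
    ε * (gammaFactor ((1 - (ε : ℂ)) / 2) (-(I * κ) + s) *
      gammaFactor ((1 - (ε : ℂ)) / 2) (I * κ + s)) := by
  have hpow : (π : ℂ) ^ (2 * s - 1) =
      (π : ℂ) ^ (-(I * κ) + s - 1 / 2) * (π : ℂ) ^ (I * κ + s - 1 / 2) := by
    rw [← Complex.cpow_add _ _ (Complex.ofReal_ne_zero.mpr Real.pi_ne_zero)]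
    congr 1
    ring
  rw [chiFactor, gammaFactor_eq_cpow_mul, gammaFactor_eq_cpow_mul, hpow,
    show 1 - (-(I * κ) + s) = 1 - s + I * κ by ring, show -(I * κ) + s = s - I * κ by ring,
    show 1 - (I * κ + s) = 1 - s - I * κ by ring, add_comm (I * κ) s]
  ring

lemma continuousOn_chiFactor (κ : ℝ) {ε : ℝ} (hε : ε = 1 ∨ ε = -1) :
    ContinuousOn (chiFactor κ ε) (Complex.re ⁻¹' Iio 1) := by
  have hfactor (w : ℂ) (hw : w.re = 0) :
      ContinuousOn (fun s => gammaFactor ((1 - (ε : ℂ)) / 2) (w + s)) (Complex.re ⁻¹' Iio 1) :=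
    (continuousOn_gammaFactor (parity_eq_zero_or_one hε)).comp (by fun_prop) fun s hs => by
      rwa [mem_preimage, Complex.add_re, hw, zero_add]
  refine ContinuousOn.congr ?_ fun s _ => chiFactor_eq_gammaFactor_mul κ ε s
  exact continuousOn_const.mul ((hfactor _ (by simp)).mul (hfactor _ (by simp)))

lemma subexpOn_chiFactor (κ : ℝ) {ε σ₁ σ₂ : ℝ} (hε : ε = 1 ∨ ε = -1) (hσ₂ : σ₂ < 1) :
    SubexpOn (chiFactor κ ε) (Complex.re ⁻¹' Icc σ₁ σ₂) := by
  have hfactor (w : ℂ) (hw : w.re = 0) :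
      SubexpOn (fun s => gammaFactor ((1 - (ε : ℂ)) / 2) (w + s)) (Complex.re ⁻¹' Icc σ₁ σ₂) :=
    ((subexpOn_gammaFactor (parity_eq_zero_or_one hε) hσ₂).comp_const_add w).mono fun s hs => by
      rwa [mem_preimage, mem_preimage, Complex.add_re, hw, zero_add]
  refine SubexpOn.congr ?_ fun s _ => (chiFactor_eq_gammaFactor_mul κ ε s).symm
  exact ((hfactor _ (by simp)).mul (hfactor _ (by simp))).const_mul _

lemma pi_pow_mul_mul_cpow (n : ℕ) {T : ℝ} (hT : 0 ≤ T) (ξ : ℂ) :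
    ((π ^ 4 * n * T : ℝ) : ℂ) ^ ξ = ((π : ℂ) ^ ξ) ^ 4 * (n : ℂ) ^ ξ * (T : ℂ) ^ ξ := by
  have harg : ((4 : ℕ) : ℝ) * (π : ℂ).arg = 0 := by
    rw [Complex.arg_ofReal_of_nonneg Real.pi_pos.le, mul_zero]
  rw [Complex.ofReal_mul, Complex.mul_cpow_ofReal_nonneg (by positivity) hT, Complex.ofReal_mul,
    Complex.mul_cpow_ofReal_nonneg (by positivity) n.cast_nonneg, Complex.ofReal_pow,
    Complex.ofReal_natCast, ← Complex.cpow_nat_mul, Complex.cpow_nat_mul' ?_ ?_]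
  · rw [harg]
    exact neg_lt_zero.mpr Real.pi_pos
  · rw [harg]
    exact Real.pi_pos.le

lemma pi_cpow_mul_Rkernel (κ t γ : ℝ) {ε T : ℝ} (hε : ε = 1 ∨ ε = -1) (hT : 0 ≤ T) (n : ℕ)
    (ξ : ℂ) : (π : ℂ) ^ (4 * I * t) * Rkernel κ t ε γ T n ξ =
      (n : ℂ) ^ ξ * (chiFactor κ ε (1 / 2 + I * t + ξ) ^ 2 * smoothingKernel γ T ξ) := by
  have hεsq : (ε : ℂ) ^ 2 = 1 := by
    rcases hε with rfl | rfl <;> push_cast <;> norm_num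
  have hpi : ((π : ℂ) ^ (2 * (1 / 2 + I * t + ξ) - 1)) ^ 2 =
      (π : ℂ) ^ (4 * I * t) * ((π : ℂ) ^ ξ) ^ 4 := by
    rw [← Complex.cpow_nat_mul, ← Complex.cpow_nat_mul,
      ← Complex.cpow_add _ _ (Complex.ofReal_ne_zero.mpr Real.pi_ne_zero)]
    congr 1
    push_cast
    ring
  rw [chiFactor, div_pow, mul_pow, mul_pow, mul_pow, hεsq, hpi, Rkernel, pi_pow_mul_mul_cpow n hT,
    smoothingKernel, show 1 - (1 / 2 + I * t + ξ) = 1 / 2 - ξ - I * t by ring,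
    show 1 / 2 + I * t + ξ = 1 / 2 + ξ + I * t by ring]
  ring

lemma Rn_eq_dualWeight (κ t γ : ℝ) {ε T : ℝ} (hε : ε = 1 ∨ ε = -1) (hT : 0 ≤ T) (n : ℕ) :
    Rn κ t ε γ T n =
      dualWeight (fun s => chiFactor κ ε s ^ 2) (1 / 2 + I * t) γ T (-(γ / 2)) n := by
  rw [dualWeight]
  push_cast
  simp_rw [← pi_cpow_mul_Rkernel κ t γ hε hT]
  rw [Rn, integral_mul_const, integral_const_mul]
  push_cast
  have hI := Complex.I_ne_zero
  field_simp

lemma div_two_ne_neg_natCast {z : ℂ} (hz : z ∈ Complex.slitPlane) (m : ℕ) : z / 2 ≠ -m := by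
  intro h
  obtain rfl : z = ((-(2 * m) : ℝ) : ℂ) := by
    rw [(div_eq_iff two_ne_zero).mp h]
    push_cast
    ring
  rw [Complex.ofReal_mem_slitPlane] at hz
  linarith [(m.cast_nonneg : (0 : ℝ) ≤ m)]

lemma ae_eq_chiFactor_mul {κ ε b : ℝ} {s₀ : ℂ} {H : ℂ → ℂ} (hε : ε = 1 ∨ ε = -1)
    (hb : s₀.re + b < 1)
    (hfe : ∀ s : ℂ, s.re = s₀.re + b →
      (∀ m : ℕ, (s + I * κ + (1 - (ε : ℂ)) / 2) / 2 ≠ -(m : ℂ)) →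
      (∀ m : ℕ, (s - I * κ + (1 - (ε : ℂ)) / 2) / 2 ≠ -(m : ℂ)) →
      (∀ m : ℕ, (1 - s + I * κ + (1 - (ε : ℂ)) / 2) / 2 ≠ -(m : ℂ)) →
      (∀ m : ℕ, (1 - s - I * κ + (1 - (ε : ℂ)) / 2) / 2 ≠ -(m : ℂ)) →
      H s = chiFactor κ ε s * H (1 - s)) :
    ∀ᵐ u : ℝ, H (s₀ + (b + u * I)) =
      chiFactor κ ε (s₀ + (b + u * I)) * H (1 - (s₀ + (b + u * I))) := by
  have hparity_im : ((1 - (ε : ℂ)) / 2).im = 0 := by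
    rcases parity_eq_zero_or_one hε with h | h <;> rw [h] <;> rfl
  have hparity_re : 0 ≤ ((1 - (ε : ℂ)) / 2).re := by
    rcases parity_eq_zero_or_one hε with h | h <;> rw [h]
    exacts [le_rfl, zero_le_one]
  filter_upwards [(toFinite {-s₀.im - κ, -s₀.im + κ}).countable.ae_notMem volume] with u hu
  rw [mem_insert_iff, mem_singleton_iff, not_or] at hu
  have hre : (s₀ + (b + u * I)).re = s₀.re + b := by rw [Complex.add_re, re_add_mul_I]
  have him : (s₀ + (b + u * I)).im = s₀.im + u := by simp
  generalize s₀ + (b + u * I) = s at hre him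
  refine hfe s hre (div_two_ne_neg_natCast (Or.inr ?_)) (div_two_ne_neg_natCast (Or.inr ?_))
    (div_two_ne_neg_natCast (Or.inl ?_)) (div_two_ne_neg_natCast (Or.inl ?_)) <;>
    simp only [Complex.add_re, Complex.sub_re, Complex.add_im, Complex.sub_im, Complex.one_re,
      Complex.I_mul_re, Complex.I_mul_im, Complex.ofReal_re, Complex.ofReal_im, hparity_im,
      hre, him]
  · exact fun h => hu.1 (by linarith)
  · exact fun h => hu.2 (by linarith)
  · linarith
  · linarith

theorem stmt_12_general (κ t ε : ℝ) (hε : ε = 1 ∨ ε = -1) (γ T σ₀ : ℝ)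
    (hγ : 0 < γ) (hσ₀ : σ₀ < 1 / 2 + γ / 2) (hT : 0 < T) (τ : ℕ → ℂ)
    (H : ℂ → ℂ) (hH : Differentiable ℂ H)
    (hgrowth : ∀ σ₁ σ₂ : ℝ, σ₁ < σ₂ → SubexpOn H (Complex.re ⁻¹' Icc σ₁ σ₂))
    (hseries : ∀ s : ℂ, σ₀ < s.re →
      Summable (fun n : ℕ => ‖τ (n + 1) * ((n + 1 : ℕ) : ℂ) ^ (-s)‖) ∧
      H s ^ 2 = ∑' n : ℕ, τ (n + 1) * ((n + 1 : ℕ) : ℂ) ^ (-s))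
    (hfe : ∀ s : ℂ, s.re = 1 / 2 - γ / 2 →
      (∀ m : ℕ, (s + I * κ + (1 - (ε : ℂ)) / 2) / 2 ≠ -(m : ℂ)) →
      (∀ m : ℕ, (s - I * κ + (1 - (ε : ℂ)) / 2) / 2 ≠ -(m : ℂ)) →
      (∀ m : ℕ, (1 - s + I * κ + (1 - (ε : ℂ)) / 2) / 2 ≠ -(m : ℂ)) →
      (∀ m : ℕ, (1 - s - I * κ + (1 - (ε : ℂ)) / 2) / 2 ≠ -(m : ℂ)) →
      H s = chiFactor κ ε s * H (1 - s)) :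
    Summable (fun n : ℕ => ‖τ (n + 1) * ((n + 1 : ℕ) : ℂ) ^ (-(1 / 2 : ℂ) - I * t) *
        (Real.exp (-(((n + 1 : ℕ) : ℝ) / T) ^ γ) : ℂ)‖) ∧
    Summable (fun n : ℕ => ‖τ (n + 1) * ((n + 1 : ℕ) : ℂ) ^ (-(1 / 2 : ℂ) + I * t) *
        Rn κ t ε γ T (n + 1)‖) ∧
    ∑' n : ℕ, τ (n + 1) * ((n + 1 : ℕ) : ℂ) ^ (-(1 / 2 : ℂ) - I * t) *
        (Real.exp (-(((n + 1 : ℕ) : ℝ) / T) ^ γ) : ℂ) =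
      H (1 / 2 + I * t) ^ 2 +
        ∑' n : ℕ, τ (n + 1) * ((n + 1 : ℕ) : ℂ) ^ (-(1 / 2 : ℂ) + I * t) *
          Rn κ t ε γ T (n + 1) := by
  have hre : (1 / 2 + I * t).re = 1 / 2 := by simp
  have hneg : -(γ / 2) < 0 := by linarith
  have hline : (1 / 2 + I * t).re + -(γ / 2) < 1 := by linarith
  have hfe_ae := ae_eq_chiFactor_mul (b := -(γ / 2)) (s₀ := 1 / 2 + I * t) hε hline
    fun s hs => hfe s (by rw [hs, hre, sub_eq_add_neg])
  have hidentity := tsum_exp_neg_div_rpow_eq_add_tsum_dualWeight (F := fun s => H s ^ 2)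
    (X := fun s => chiFactor κ ε s ^ 2) (a := fun n : ℕ => τ (n + 1))
    (x := fun n : ℕ => ((n + 1 : ℕ) : ℝ)) (s₀ := 1 / 2 + I * t)
    (fun n => Nat.cast_pos.mpr n.succ_pos) hT (by linarith : -γ < -(γ / 2)) hneg
    (hH.pow 2) (fun σ₁ σ₂ hσ => (hgrowth σ₁ σ₂ hσ).sq) hseries (by rw [hre]; linarith)
    ((subexpOn_chiFactor κ hε hline).sq.mono (preimage_mono (Icc_self _).ge))
    (((continuousOn_chiFactor κ hε).pow 2).mono fun s hs => hs.trans_lt hline)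
    (hfe_ae.mono fun u hu => by rw [← mul_pow, ← hu])
  simp_rw [Rn_eq_dualWeight κ t γ hε hT.le, show -(1 / 2 : ℂ) - I * t = -(1 / 2 + I * t) by ring,
    show -(1 / 2 : ℂ) + I * t = -(1 - (1 / 2 + I * t)) by ring]
  exact hidentity

end

/-- The exact identity combining (3.43), (3.45) and (3.46) in the proof of
Lemma 9 of Jutila–Motohashi: the smoothed sum of the coefficients of `H²`
equals the central value plus a dual sum. -/
theorem stmt_12 (κ t ε : ℝ) (hε : ε = 1 ∨ ε = -1) (γ T C₀ : ℝ)
    (hγ : 4 ≤ γ) (hT : 0 < T) (hC₀ : 0 < C₀)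
    (τ : ℕ → ℂ) (hτ : ∀ n : ℕ, 1 ≤ n → ‖τ n‖ ≤ C₀ * Real.sqrt n)
    (H : ℂ → ℂ) (hH : Differentiable ℂ H)
    (hgrowth : ∀ σ₁ σ₂ : ℝ, σ₁ < σ₂ → ∃ A B : ℝ, 0 < A ∧ 0 < B ∧
      ∀ σ u : ℝ, σ₁ ≤ σ → σ ≤ σ₂ → ‖H (σ + u * Complex.I)‖ ≤ A * (1 + |u|) ^ B)
    (hseries : ∀ s : ℂ, 2 < s.re →
      Summable (fun n : ℕ => ‖τ (n + 1) * ((n + 1 : ℕ) : ℂ) ^ (-s)‖) ∧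
      H s ^ 2 = ∑' n : ℕ, τ (n + 1) * ((n + 1 : ℕ) : ℂ) ^ (-s))
    (hfe : ∀ s : ℂ, s.re = 1 / 2 - γ / 2 →
      (∀ m : ℕ, (s + Complex.I * κ + (1 - (ε : ℂ)) / 2) / 2 ≠ -(m : ℂ)) →
      (∀ m : ℕ, (s - Complex.I * κ + (1 - (ε : ℂ)) / 2) / 2 ≠ -(m : ℂ)) →
      (∀ m : ℕ, (1 - s + Complex.I * κ + (1 - (ε : ℂ)) / 2) / 2 ≠ -(m : ℂ)) →
      (∀ m : ℕ, (1 - s - Complex.I * κ + (1 - (ε : ℂ)) / 2) / 2 ≠ -(m : ℂ)) →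
      H s = chiFactor κ ε s * H (1 - s)) :
    Summable (fun n : ℕ => ‖τ (n + 1) * ((n + 1 : ℕ) : ℂ) ^ (-(1 / 2 : ℂ) - Complex.I * t) *
        (Real.exp (-(((n + 1 : ℕ) : ℝ) / T) ^ γ) : ℂ)‖) ∧
    Summable (fun n : ℕ => ‖τ (n + 1) * ((n + 1 : ℕ) : ℂ) ^ (-(1 / 2 : ℂ) + Complex.I * t) *
        Rn κ t ε γ T (n + 1)‖) ∧
    ∑' n : ℕ, τ (n + 1) * ((n + 1 : ℕ) : ℂ) ^ (-(1 / 2 : ℂ) - Complex.I * t) *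
        (Real.exp (-(((n + 1 : ℕ) : ℝ) / T) ^ γ) : ℂ) =
      H (1 / 2 + Complex.I * t) ^ 2 +
        ∑' n : ℕ, τ (n + 1) * ((n + 1 : ℕ) : ℂ) ^ (-(1 / 2 : ℂ) + Complex.I * t) *
          Rn κ t ε γ T (n + 1) := by
  refine stmt_12_general κ t ε hε γ T 2 (by linarith) (by linarith) hT τ H hH ?_ hseries hfe
  intro σ₁ σ₂ hσ
  obtain ⟨A, B, -, hB, hAB⟩ := hgrowth σ₁ σ₂ hσ
  refine subexpOn_of_norm_le_rpow (A := A) hB fun s hs => ?_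
  simpa only [Complex.re_add_im] using hAB s.re s.im hs.1 hs.2
end

section
/- For every ε₁ ∈ (0, 1/10) there exist constants C > 0 and K₀ > 0 with the following property. For all K ≥ K₀, all G with K^{ε₁} ≤ G ≤ K^{1−ε₁}, all t with 0 ≤ t ≤ K^{1/ε₁}, all κ ∈ ℝ with |κ − K| ≤ G, both choices ε ∈ {−1,1}, and all integers n ≥ 1, setting γ := (log K)², T := (K+t)(|K−t|+G)/(4π²) and a := (1−ε)/2, one has |R(n)| ≤ C (n/T)^{−γ/2}. -/
open MeasureTheory Real

/-! On the line `Re ξ = -γ/2` both quotients of Gamma values have the shape `Γ(c + s) / Γ(c - s)`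
with `Re s = γ/4`, hence are at most a constant times `‖s‖ ^ (γ/2)` up to lower order terms. This
follows from the functional equation, once one knows `Γ(b + δ) ≪ ‖b‖ ^ δ Γ(b)` for `0 ≤ δ ≤ 1`,
which in turn comes from Euler's product by comparing the factors at `w`, `w + 1` and `w + δ`.
With `P = |K - t| + G`, `Q = K + t` and `ξ = -γ/2 + iu`, the product of the squared quotients is
therefore `≪ (P Q / 4) ^ γ`, at the cost of a factor `exp (|u| / (2γ))`, because `4 γ²` is at most
`P` and `Q`, and `4 γ G` at most `Q`. The factor `Γ(ξ/γ) ≪ exp (-|u|/γ)` absorbs this cost, and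
`(P Q / 4) ^ γ` combines with `(π⁴ n T) ^ (-γ/2)` to `(n / T) ^ (-γ/2)`.
-/

lemma norm_rpow_mul_norm_add_one_rpow_le {w : ℂ} {δ : ℝ} (hw : 0 < w.re) (hδ : 0 ≤ δ)
    (hδ' : δ ≤ 1) :
    ‖w‖ ^ (1 - δ) * ‖w + 1‖ ^ δ ≤ exp (1 / w.re ^ 2 / 8) * ‖w + δ‖ := by
  have amgm := geom_mean_le_arith_mean2_weighted (sub_nonneg.2 hδ') hδ
    (sq_nonneg ‖w‖) (sq_nonneg ‖w + 1‖) (by ring)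
  have variance : (1 - δ) * ‖w‖ ^ 2 + δ * ‖w + 1‖ ^ 2 = ‖w + δ‖ ^ 2 + δ * (1 - δ) := by
    simp only [Complex.sq_norm, Complex.normSq_apply, Complex.add_re, Complex.add_im,
      Complex.one_re, Complex.one_im, Complex.ofReal_re, Complex.ofReal_im]
    ring
  have variance_le : δ * (1 - δ) ≤ ‖w + δ‖ ^ 2 * (1 / (4 * w.re ^ 2)) := by
    have hre : w.re ≤ ‖w + δ‖ :=
      (by simpa : w.re ≤ (w + δ).re).trans (Complex.re_le_norm _)
    have hsq : w.re ^ 2 ≤ ‖w + δ‖ ^ 2 := by gcongr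
    rw [mul_one_div, le_div_iff₀ (by positivity)]
    nlinarith [sq_nonneg (δ - 1 / 2), sq_nonneg w.re]
  refine le_of_sq_le_sq ?_ (by positivity)
  calc (‖w‖ ^ (1 - δ) * ‖w + 1‖ ^ δ) ^ 2
      = (‖w‖ ^ 2) ^ (1 - δ) * (‖w + 1‖ ^ 2) ^ δ := by
        rw [mul_pow, rpow_pow_comm (norm_nonneg _), rpow_pow_comm (norm_nonneg _)]
    _ ≤ ‖w + δ‖ ^ 2 + δ * (1 - δ) := variance ▸ amgm
    _ ≤ (1 / (4 * w.re ^ 2) + 1) * ‖w + δ‖ ^ 2 := by linarith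
    _ ≤ exp (1 / (4 * w.re ^ 2)) * ‖w + δ‖ ^ 2 := by
        gcongr
        exact add_one_le_exp _
    _ = (exp (1 / w.re ^ 2 / 8) * ‖w + δ‖) ^ 2 := by
        rw [mul_pow, ← exp_nat_mul]
        congr 2
        push_cast
        field_simp
        norm_num

lemma prod_norm_add_natCast_mul_rpow_le {b : ℂ} {δ : ℝ} (hb : 0 < b.re) (hδ : 0 ≤ δ)
    (hδ' : δ ≤ 1) (n : ℕ) :
    (∏ j ∈ Finset.range n, ‖b + j‖) * ‖b + n‖ ^ δ ≤
      exp ((∑ j ∈ Finset.range n, 1 / (b.re + j) ^ 2) / 8) * ‖b‖ ^ δ *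
        ∏ j ∈ Finset.range n, ‖b + δ + j‖ := by
  induction n with
  | zero => simp
  | succ n ih =>
    have hre : (b + n).re = b.re + n := by simp
    have hre_pos : 0 < (b + n).re := by rw [hre]; positivity
    have hnorm_pos : 0 < ‖b + n‖ := hre_pos.trans_le (Complex.re_le_norm _)
    have step := norm_rpow_mul_norm_add_one_rpow_le hre_pos hδ hδ'
    rw [hre] at step
    rw [Finset.prod_range_succ, Finset.prod_range_succ, Finset.sum_range_succ, add_div,
      exp_add]
    push_cast
    calc (∏ j ∈ Finset.range n, ‖b + j‖) * ‖b + n‖ * ‖b + (n + 1)‖ ^ δ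
        = ((∏ j ∈ Finset.range n, ‖b + j‖) * ‖b + n‖ ^ δ) *
            (‖b + n‖ ^ (1 - δ) * ‖b + n + 1‖ ^ δ) := by
          rw [rpow_sub hnorm_pos, rpow_one, add_assoc]
          field_simp
      _ ≤ _ := mul_le_mul ih step (by positivity) (by positivity)
      _ = _ := by
          rw [add_right_comm b]
          ring

lemma sum_one_div_add_natCast_sq_le {x : ℝ} (hx : 1 ≤ x) (n : ℕ) :
    ∑ j ∈ Finset.range n, 1 / (x + j) ^ 2 ≤ 2 :=
  calc ∑ j ∈ Finset.range n, 1 / (x + j) ^ 2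
      ≤ ∑ j ∈ Finset.range n, (((j + 1 : ℕ) : ℝ) ^ 2)⁻¹ := by
        refine Finset.sum_le_sum fun j _ ↦ ?_
        rw [one_div, Nat.cast_succ, add_comm x]
        gcongr
    _ = ∑ j ∈ Finset.Ioo 0 (n + 1), ((j : ℝ) ^ 2)⁻¹ := by
        rw [Finset.range_eq_Ico, Finset.sum_Ico_add' fun j : ℕ ↦ ((j : ℝ) ^ 2)⁻¹]
        rfl
    _ ≤ 2 := by simpa using sum_Ioo_inv_sq_le (α := ℝ) 0 (n + 1)

lemma norm_GammaSeq {n : ℕ} (hn : 0 < n) (s : ℂ) :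
    ‖Complex.GammaSeq s n‖ =
      (n : ℝ) ^ s.re * n.factorial / ∏ j ∈ Finset.range (n + 1), ‖s + j‖ := by
  rw [Complex.GammaSeq, norm_div, norm_mul, norm_prod, Complex.norm_natCast,
    Complex.norm_natCast_cpow_of_pos hn]

lemma norm_GammaSeq_add_ofReal_le {b : ℂ} {δ : ℝ} (hb : 1 ≤ b.re) (hδ : 0 ≤ δ) (hδ' : δ ≤ 1)
    {n : ℕ} (hn : 0 < n) :
    ‖Complex.GammaSeq (b + δ) n‖ ≤ exp (1 / 4) * ‖b‖ ^ δ * ‖Complex.GammaSeq b n‖ := by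
  have prod_pos {c : ℂ} (hc : 1 ≤ c.re) : 0 < ∏ j ∈ Finset.range (n + 1), ‖c + j‖ :=
    Finset.prod_pos fun j _ ↦ by
      have hre : 0 < (c + j).re := by
        rw [Complex.add_re, Complex.natCast_re]
        positivity
      exact hre.trans_le (Complex.re_le_norm _)
  have hsum : (∑ j ∈ Finset.range (n + 1), 1 / (b.re + j) ^ 2) / 8 ≤ 1 / 4 := by
    linarith [sum_one_div_add_natCast_sq_le hb (n + 1)]
  have hnorm : (n : ℝ) ≤ ‖b + (n + 1 : ℕ)‖ := by
    refine le_trans ?_ (Complex.re_le_norm _)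
    rw [Complex.add_re, Complex.natCast_re, Nat.cast_succ]
    linarith
  have hbδ : 1 ≤ (b + δ).re := by
    rw [Complex.add_re, Complex.ofReal_re]
    linarith
  have hprod : (n : ℝ) ^ δ * ∏ j ∈ Finset.range (n + 1), ‖b + j‖ ≤
      exp (1 / 4) * ‖b‖ ^ δ * ∏ j ∈ Finset.range (n + 1), ‖b + δ + j‖ :=
    calc (n : ℝ) ^ δ * ∏ j ∈ Finset.range (n + 1), ‖b + j‖
        ≤ (∏ j ∈ Finset.range (n + 1), ‖b + j‖) * ‖b + (n + 1 : ℕ)‖ ^ δ := by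
          rw [mul_comm]
          gcongr
      _ ≤ _ := prod_norm_add_natCast_mul_rpow_le (by linarith) hδ hδ' (n + 1)
      _ ≤ _ := by gcongr
  rw [norm_GammaSeq hn, norm_GammaSeq hn, Complex.add_re, Complex.ofReal_re,
    rpow_add (by positivity), mul_div_assoc',
    div_le_div_iff₀ (prod_pos hbδ) (prod_pos hb)]
  linarith [mul_le_mul_of_nonneg_left hprod
    (by positivity : 0 ≤ (n : ℝ) ^ b.re * n.factorial)]

lemma norm_Gamma_add_ofReal_le {b : ℂ} {δ : ℝ} (hb : 1 ≤ b.re) (hδ : 0 ≤ δ) (hδ' : δ ≤ 1) :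
    ‖Complex.Gamma (b + δ)‖ ≤ exp (1 / 4) * ‖b‖ ^ δ * ‖Complex.Gamma b‖ := by
  refine le_of_tendsto_of_tendsto (Complex.GammaSeq_tendsto_Gamma (b + δ)).norm
    ((Complex.GammaSeq_tendsto_Gamma b).norm.const_mul _) ?_
  filter_upwards [Filter.eventually_gt_atTop 0] with n hn
  exact norm_GammaSeq_add_ofReal_le hb hδ hδ' hn

-- Stated for reciprocals: at a pole `z`, where `Complex.Gamma z = 0`, the inequality
-- `‖Γ(z + M)‖ ≤ B ^ M * ‖Γ(z)‖` fails.
lemma norm_inv_Gamma_le_pow_mul {z : ℂ} {B : ℝ} (M : ℕ) (hB : ∀ j < M, ‖z + j‖ ≤ B) :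
    ‖(Complex.Gamma z)⁻¹‖ ≤ B ^ M * ‖(Complex.Gamma (z + M))⁻¹‖ := by
  induction M with
  | zero => simp
  | succ M ih =>
    have hBM := hB M M.lt_succ_self
    have hB0 : 0 ≤ B := (norm_nonneg _).trans hBM
    calc ‖(Complex.Gamma z)⁻¹‖
        ≤ B ^ M * ‖(Complex.Gamma (z + M))⁻¹‖ := ih fun j hj ↦ hB j (hj.trans M.lt_succ_self)
      _ = B ^ M * ‖z + M‖ * ‖(Complex.Gamma (z + (M + 1 : ℕ)))⁻¹‖ := by
        rw [Complex.one_div_Gamma_eq_self_mul_one_div_Gamma_add_one (z + M), norm_mul, mul_assoc,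
          Nat.cast_succ, ← add_assoc]
      _ ≤ B ^ (M + 1) * ‖(Complex.Gamma (z + (M + 1 : ℕ)))⁻¹‖ := by
        rw [pow_succ]
        gcongr

lemma norm_add_ofReal_le_of_mem_Icc {z : ℂ} {σ x B : ℝ} (hz : ‖z‖ ≤ B) (hzσ : ‖z + σ‖ ≤ B)
    (hx : x ∈ Set.Icc 0 σ) : ‖z + x‖ ≤ B := by
  have hseg : z + x ∈ segment ℝ z (z + σ) := by
    rw [segment_eq_image', Set.mem_image]
    rcases (hx.1.trans hx.2).eq_or_lt with rfl | hσ
    · exact ⟨0, by simp, by simp [le_antisymm hx.2 hx.1]⟩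
    · refine ⟨x / σ, ⟨div_nonneg hx.1 hσ.le, div_le_one_of_le₀ hx.2 hσ.le⟩, ?_⟩
      simp [← Complex.ofReal_mul, -Complex.ofReal_div, div_mul_cancel₀ _ hσ.ne']
  simpa using (convex_closedBall (0 : ℂ) B).segment_subset (by simpa) (by simpa) hseg

lemma norm_Gamma_add_ofReal_div_Gamma_le {z : ℂ} {σ B : ℝ} (hσ : 0 ≤ σ) (hre : 2 ≤ z.re + σ)
    (hz : ‖z‖ ≤ B) (hzσ : ‖z + σ‖ ≤ B) :
    ‖Complex.Gamma (z + σ) / Complex.Gamma z‖ ≤ exp (1 / 4) * B ^ σ := by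
  set M : ℕ := ⌊σ⌋₊
  set δ : ℝ := σ - M with hδ
  have hM : (M : ℝ) ≤ σ := Nat.floor_le hσ
  have hM' : σ < M + 1 := Nat.lt_floor_add_one σ
  have hδ0 : 0 ≤ δ := sub_nonneg.2 hM
  have hzM : 1 ≤ (z + M).re := by
    rw [Complex.add_re, Complex.natCast_re]
    linarith
  have hzM_le : ‖z + M‖ ≤ B := by
    simpa using norm_add_ofReal_le_of_mem_Icc hz hzσ ⟨M.cast_nonneg, hM⟩
  have hB : 0 < B := by linarith [Complex.re_le_norm (z + M)]
  have fractional_shift := norm_Gamma_add_ofReal_le hzM hδ0 (by linarith)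
  have integer_shift := norm_inv_Gamma_le_pow_mul (z := z) M fun j hj ↦ by
    have hjσ : (j : ℝ) ≤ σ := (Nat.cast_le.2 hj.le).trans hM
    simpa using norm_add_ofReal_le_of_mem_Icc hz hzσ ⟨j.cast_nonneg, hjσ⟩
  have hΓ : ‖Complex.Gamma (z + M)‖ ≠ 0 :=
    norm_ne_zero_iff.2 (Complex.Gamma_ne_zero_of_re_pos (by linarith))
  have hsplit : z + σ = z + M + δ := by rw [hδ]; push_cast; ring
  rw [hsplit, div_eq_mul_inv, norm_mul]
  calc _ ≤ (exp (1 / 4) * ‖z + M‖ ^ δ * ‖Complex.Gamma (z + M)‖) *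
        (B ^ M * ‖(Complex.Gamma (z + M))⁻¹‖) := by gcongr
    _ = exp (1 / 4) * (‖z + M‖ ^ δ * B ^ M) := by
        rw [norm_inv]
        field_simp
    _ ≤ exp (1 / 4) * (B ^ δ * B ^ M) := by gcongr
    _ = exp (1 / 4) * B ^ σ := by
        rw [← rpow_add_natCast hB.ne', hδ, sub_add_cancel]

/-- The quotient `Γ(c + s) / Γ(c - s)` which enters the functional equation; the kernel of `R(n)`
is built from two of them with centre `c = (1/2 + a)/2 = (2 - ε)/4`. -/
noncomputable def gammaQuotient (c : ℝ) (s : ℂ) : ℂ :=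
  Complex.Gamma (c + s) / Complex.Gamma (c - s)

lemma Rkernel_eq_gammaQuotient (κ t ε γ T : ℝ) (n : ℕ) (ξ : ℂ) :
    Rkernel κ t ε γ T n ξ =
      gammaQuotient ((2 - ε) / 4) ((-ξ + (κ - t : ℝ) * Complex.I) / 2) ^ 2 *
        gammaQuotient ((2 - ε) / 4) ((-ξ + (-(κ + t) : ℝ) * Complex.I) / 2) ^ 2 *
        ((π ^ 4 * n * T : ℝ) : ℂ) ^ ξ * Complex.Gamma (ξ / γ) := by
  simp only [Rkernel, gammaQuotient]
  congr 4 <;> congr 2 <;> push_cast <;> ring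

lemma norm_gammaQuotient_le {c : ℝ} {s : ℂ} (hs : 0 ≤ s.re) (hre : 2 ≤ c + s.re) :
    ‖gammaQuotient c s‖ ≤ exp (1 / 4) * (|c| + ‖s‖) ^ (2 * s.re) := by
  set z : ℂ := (starRingEnd ℂ) (c - s) with hz
  have hzσ : z + (2 * s.re : ℝ) = c + s := by
    rw [hz, map_sub, Complex.conj_ofReal, ← Complex.add_conj]
    ring
  have hz_re : z.re = c - s.re := by simp [hz]
  have hnorm : ‖gammaQuotient c s‖ =
      ‖Complex.Gamma (z + (2 * s.re : ℝ)) / Complex.Gamma z‖ := by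
    rw [hzσ, hz, Complex.Gamma_conj, norm_div, RCLike.norm_conj, ← norm_div, gammaQuotient]
  rw [hnorm]
  refine norm_Gamma_add_ofReal_div_Gamma_le (by linarith) (by linarith) ?_ ?_
  · simpa [hz, -map_sub] using norm_sub_le (c : ℂ) s
  · rw [hzσ]
    simpa using norm_add_le (c : ℂ) s

lemma add_rpow_le_rpow_mul_exp {A D p : ℝ} (hA : 0 < A) (hAD : 0 ≤ A + D) (hp : 0 ≤ p) :
    (A + D) ^ p ≤ A ^ p * exp (D / A * p) :=
  calc (A + D) ^ p ≤ (A * exp (D / A)) ^ p := by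
        gcongr
        calc A + D = A * (D / A + 1) := by field_simp; ring
          _ ≤ A * exp (D / A) := by gcongr; exact add_one_le_exp _
    _ = A ^ p * exp (D / A * p) := by rw [mul_rpow hA.le (exp_pos _).le, ← exp_mul]

lemma norm_gammaQuotient_sq_le {c A D : ℝ} {s : ℂ} (hs : 0 ≤ s.re) (hre : 2 ≤ c + s.re)
    (hA : 0 < A) (hAD : |c| + ‖s‖ ≤ A + D) :
    ‖gammaQuotient c s‖ ^ 2 ≤ exp (1 / 2) * A ^ (4 * s.re) * exp (D / A * (4 * s.re)) := by
  have hquot := norm_gammaQuotient_le hs hre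
  have hAD_nonneg : 0 ≤ A + D := (by positivity : 0 ≤ |c| + ‖s‖).trans hAD
  calc ‖gammaQuotient c s‖ ^ 2 ≤ (exp (1 / 4) * (|c| + ‖s‖) ^ (2 * s.re)) ^ 2 := by gcongr
    _ = exp (1 / 2) * (|c| + ‖s‖) ^ (4 * s.re) := by
        rw [mul_pow, ← exp_nat_mul, ← rpow_mul_natCast (by positivity)]
        ring_nf
    _ ≤ exp (1 / 2) * (A + D) ^ (4 * s.re) := by gcongr
    _ ≤ exp (1 / 2) * (A ^ (4 * s.re) * exp (D / A * (4 * s.re))) := by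
        gcongr
        exact add_rpow_le_rpow_mul_exp hA hAD_nonneg (by linarith)
    _ = _ := by rw [mul_assoc]

/-- The vertical line carrying the contour of `R(n)`, parametrized by its imaginary part. -/
noncomputable def contourPoint (γ u : ℝ) : ℂ := -(γ / 2 : ℝ) + u * Complex.I

@[simp]
lemma contourPoint_re (γ u : ℝ) : (contourPoint γ u).re = -(γ / 2) := by simp [contourPoint]

@[simp]
lemma contourPoint_im (γ u : ℝ) : (contourPoint γ u).im = u := by simp [contourPoint]

lemma norm_gammaQuotient_contour_sq_le {c γ P d u y : ℝ} (hc : 0 ≤ c) (hc' : c ≤ 1) (hγ : 8 ≤ γ)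
    (hPγ : 4 * γ ^ 2 ≤ P) (hPd : 4 * γ * d ≤ P) (hy : |y| ≤ P + d) :
    ‖gammaQuotient c ((-contourPoint γ u + y * Complex.I) / 2)‖ ^ 2 ≤
      exp 1 * (P / 2) ^ γ * exp (|u| / (4 * γ)) := by
  set s := (-contourPoint γ u + y * Complex.I) / 2 with hs
  set D := 1 + γ / 4 + (d + |u|) / 2 with hD
  have hP : 0 < P := by nlinarith
  have hs_re : s.re = γ / 4 := by
    simp only [hs, Complex.div_ofNat_re, Complex.add_re, Complex.neg_re, contourPoint_re,
      Complex.re_ofReal_mul, Complex.I_re]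
    ring
  have hs_im : s.im = (y - u) / 2 := by
    simp only [hs, Complex.div_ofNat_im, Complex.add_im, Complex.neg_im, contourPoint_im,
      Complex.im_ofReal_mul, Complex.I_im]
    ring
  have hnorm : |c| + ‖s‖ ≤ P / 2 + D := by
    have hle := Complex.norm_le_abs_re_add_abs_im s
    rw [hs_re, hs_im, abs_div (y - u), abs_two, abs_of_nonneg (by linarith : 0 ≤ γ / 4)] at hle
    rw [abs_of_nonneg hc]
    linarith [abs_sub y u]
  have hexponent : D / (P / 2) * γ ≤ 1 / 2 + |u| / (4 * γ) := by
    have hu : γ * |u| ≤ P * (|u| / (4 * γ)) :=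
      calc γ * |u| = 4 * γ ^ 2 * (|u| / (4 * γ)) := by field_simp
        _ ≤ P * (|u| / (4 * γ)) := by gcongr
    rw [div_div_eq_mul_div, div_mul_eq_mul_div, div_le_iff₀ hP]
    nlinarith
  have hquot := norm_gammaQuotient_sq_le (by linarith) (by linarith) (half_pos hP) hnorm
  rw [hs_re, mul_div_cancel₀ γ four_ne_zero] at hquot
  calc ‖gammaQuotient c s‖ ^ 2
      ≤ exp (1 / 2) * (P / 2) ^ γ * exp (D / (P / 2) * γ) := hquot
    _ ≤ exp (1 / 2) * (P / 2) ^ γ * exp (1 / 2 + |u| / (4 * γ)) := by gcongr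
    _ = exp 1 * (P / 2) ^ γ * exp (|u| / (4 * γ)) := by
        rw [exp_add, ← add_halves (1 : ℝ), exp_add (1 / 2)]
        ring_nf

lemma norm_Gamma_half_add_mul_I_sq (v : ℝ) :
    ‖Complex.Gamma (1 / 2 + v * Complex.I)‖ ^ 2 = π / cosh (π * v) := by
  have reflection := Complex.Gamma_mul_Gamma_one_sub (1 / 2 + v * Complex.I)
  have hconj : (1 : ℂ) - (1 / 2 + v * Complex.I) =
      (starRingEnd ℂ) (1 / 2 + v * Complex.I) := by
    rw [map_add, map_mul, map_div₀, map_one, Complex.conj_ofNat, Complex.conj_ofReal,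
      Complex.conj_I]
    ring
  have hsin : Complex.sin (π * (1 / 2 + v * Complex.I)) = Complex.cosh (π * v) := by
    rw [← Complex.cos_mul_I, ← Complex.sin_add_pi_div_two]
    ring_nf
  rw [hconj, Complex.Gamma_conj, Complex.mul_conj', hsin] at reflection
  exact_mod_cast reflection

lemma exp_abs_le_two_mul_cosh (x : ℝ) : exp |x| ≤ 2 * cosh x := by
  rw [← cosh_abs, cosh_eq]
  linarith [exp_pos (-|x|)]

lemma norm_Gamma_half_add_mul_I_le (v : ℝ) :
    ‖Complex.Gamma (1 / 2 + v * Complex.I)‖ ≤ 3 * exp (-|v|) := by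
  have hcosh : exp (2 * |v|) ≤ 2 * cosh (π * v) :=
    calc exp (2 * |v|) ≤ exp |π * v| := by
          rw [abs_mul, abs_of_pos pi_pos]
          gcongr
          exact two_le_pi
      _ ≤ 2 * cosh (π * v) := exp_abs_le_two_mul_cosh _
  refine le_of_sq_le_sq ?_ (by positivity)
  rw [norm_Gamma_half_add_mul_I_sq, div_le_iff₀ (cosh_pos _)]
  calc π ≤ 9 / 2 := by linarith [pi_le_four]
    _ = (3 * exp (-|v|)) ^ 2 * (exp (2 * |v|) / 2) := by
      rw [mul_pow, ← exp_nat_mul, mul_div_assoc', mul_assoc, ← exp_add]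
      norm_num
    _ ≤ (3 * exp (-|v|)) ^ 2 * cosh (π * v) := by
      gcongr
      linarith

lemma norm_Gamma_neg_half_add_mul_I_le (v : ℝ) :
    ‖Complex.Gamma (-(1 / 2) + v * Complex.I)‖ ≤ 6 * exp (-|v|) := by
  set w : ℂ := -(1 / 2) + v * Complex.I with hw
  have hnorm : 1 / 2 ≤ ‖w‖ := by
    refine le_trans ?_ (Complex.abs_re_le_norm w)
    norm_num [hw]
  have hrec := congrArg norm (Complex.Gamma_add_one w (norm_pos_iff.1 (by linarith)))
  rw [norm_mul, show w + 1 = 1 / 2 + v * Complex.I by rw [hw]; ring] at hrec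
  nlinarith [norm_nonneg (Complex.Gamma w), norm_Gamma_half_add_mul_I_le v]

lemma norm_Gamma_contourPoint_div_le {γ : ℝ} (hγ : 0 < γ) (u : ℝ) :
    ‖Complex.Gamma (contourPoint γ u / γ)‖ ≤ 6 * exp (-(|u| / γ)) := by
  have hpoint : contourPoint γ u / γ = -(1 / 2) + (u / γ : ℝ) * Complex.I := by
    have : (γ : ℂ) ≠ 0 := by exact_mod_cast hγ.ne'
    rw [contourPoint]
    push_cast
    field_simp
  simpa [hpoint, abs_div, abs_of_pos hγ] using norm_Gamma_neg_half_add_mul_I_le (u / γ)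

lemma half_rpow_mul_half_rpow_mul_rpow_neg {γ P Q m : ℝ} (hP : 0 < P) (hQ : 0 < Q)
    (hm : 0 < m) :
    (P / 2) ^ γ * (Q / 2) ^ γ * (π ^ 4 * m * (Q * P / (4 * π ^ 2))) ^ (-(γ / 2)) =
      (m / (Q * P / (4 * π ^ 2))) ^ (-γ / 2) := by
  have hsq : (P / 2) ^ γ * (Q / 2) ^ γ = ((P * Q / 4) ^ 2) ^ (γ / 2) := by
    rw [← mul_rpow (by positivity) (by positivity), ← rpow_natCast_mul (by positivity)]
    ring_nf
  rw [hsq, neg_div, rpow_neg (by positivity), rpow_neg (by positivity), ← div_eq_mul_inv,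
    ← div_rpow (by positivity) (by positivity), ← inv_rpow (by positivity)]
  congr 1
  field_simp

lemma norm_Rkernel_contour_le {κ t ε γ P Q d : ℝ} (hε : |ε| ≤ 2) (hγ : 8 ≤ γ)
    (hP : |κ - t| ≤ P) (hQ : |κ + t| ≤ Q + d) (hPγ : 4 * γ ^ 2 ≤ P) (hQγ : 4 * γ ^ 2 ≤ Q)
    (hQd : 4 * γ * d ≤ Q) {n : ℕ} (hn : 1 ≤ n) (u : ℝ) :
    ‖Rkernel κ t ε γ (Q * P / (4 * π ^ 2)) n (contourPoint γ u)‖ ≤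
      6 * exp 2 * ((n : ℝ) / (Q * P / (4 * π ^ 2))) ^ (-γ / 2) * exp (-(1 / (2 * γ)) * |u|) := by
  have hP0 : 0 < P := by nlinarith
  have hQ0 : 0 < Q := by nlinarith
  have hn0 : (0 : ℝ) < n := by exact_mod_cast hn
  obtain ⟨hε_lower, hε_upper⟩ := abs_le.1 hε
  have hc : 0 ≤ (2 - ε) / 4 := by linarith
  have hc' : (2 - ε) / 4 ≤ 1 := by linarith
  have hquot₁ := norm_gammaQuotient_contour_sq_le (d := 0) (u := u) hc hc' hγ hPγ
    (by simpa using hP0.le) (by simpa using hP)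
  have hquot₂ := norm_gammaQuotient_contour_sq_le (u := u) hc hc' hγ hQγ hQd
    ((abs_neg (κ + t)).trans_le hQ)
  have hpow : ‖((π ^ 4 * n * (Q * P / (4 * π ^ 2)) : ℝ) : ℂ) ^ contourPoint γ u‖ =
      (π ^ 4 * n * (Q * P / (4 * π ^ 2))) ^ (-(γ / 2)) := by
    rw [Complex.norm_cpow_eq_rpow_re_of_pos (by positivity), contourPoint_re]
  rw [Rkernel_eq_gammaQuotient, norm_mul, norm_mul, norm_mul, norm_pow, norm_pow, hpow]
  calc _ ≤ (exp 1 * (P / 2) ^ γ * exp (|u| / (4 * γ))) *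
        (exp 1 * (Q / 2) ^ γ * exp (|u| / (4 * γ))) *
        (π ^ 4 * n * (Q * P / (4 * π ^ 2))) ^ (-(γ / 2)) * (6 * exp (-(|u| / γ))) := by
        gcongr
        exact norm_Gamma_contourPoint_div_le (by linarith) u
    _ = 6 * (exp 1 * exp 1) *
        ((P / 2) ^ γ * (Q / 2) ^ γ * (π ^ 4 * n * (Q * P / (4 * π ^ 2))) ^ (-(γ / 2))) *
        (exp (|u| / (4 * γ)) * exp (|u| / (4 * γ)) * exp (-(|u| / γ))) := by ring
    _ = _ := by
        rw [half_rpow_mul_half_rpow_mul_rpow_neg hP0 hQ0 hn0, ← exp_add, ← exp_add, ← exp_add]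
        congr 2
        · norm_num
        · field_simp
          ring

lemma integral_exp_neg_mul_abs {b : ℝ} (hb : 0 < b) : ∫ u : ℝ, exp (-b * |u|) = 2 / b := by
  rw [integral_comp_abs (f := fun x ↦ exp (-b * x)), integral_exp_mul_Ioi (neg_lt_zero.2 hb)]
  simp only [mul_zero, exp_zero, neg_div_neg_eq]
  ring

lemma norm_Rn_le_of_norm_Rkernel_le {κ t ε γ T A : ℝ} {n : ℕ} (hγ : 0 < γ)
    (h : ∀ u : ℝ, ‖Rkernel κ t ε γ T n (contourPoint γ u)‖ ≤
      A * exp (-(1 / (2 * γ)) * |u|)) :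
    ‖Rn κ t ε γ T n‖ ≤ 2 * A / π := by
  have hint := integral_exp_neg_mul_abs (by positivity : 0 < 1 / (2 * γ))
  have hintegrable : Integrable fun u : ℝ ↦ exp (-(1 / (2 * γ)) * |u|) :=
    .of_integral_ne_zero (by rw [hint]; positivity)
  have hle : ‖∫ u : ℝ, Rkernel κ t ε γ T n (contourPoint γ u) * Complex.I‖ ≤
      A * (2 / (1 / (2 * γ))) := by
    rw [← hint, ← integral_const_mul]
    exact norm_integral_le_of_norm_le (hintegrable.const_mul A)
      (.of_forall fun u ↦ by simpa using h u)
  have hprefactor : ‖(π : ℂ) ^ (4 * Complex.I * t) / (2 * (π : ℂ) * Complex.I * γ)‖ =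
      1 / (2 * π * γ) := by
    simp [Complex.norm_cpow_eq_rpow_re_of_pos pi_pos, abs_of_pos pi_pos, abs_of_pos hγ]
  calc ‖Rn κ t ε γ T n‖ ≤ 1 / (2 * π * γ) * (A * (2 / (1 / (2 * γ)))) := by
        rw [Rn, norm_mul, hprefactor]
        gcongr
        exact hle
    _ = 2 * A / π := by field_simp

lemma norm_Rn_le {K G t κ ε γ : ℝ} (hε : |ε| ≤ 2) (hγ : 8 ≤ γ) (hGγ : 4 * γ ^ 2 ≤ G)
    (hγG : 4 * γ * G ≤ K) (ht : 0 ≤ t) (hκ : |κ - K| ≤ G) {n : ℕ} (hn : 1 ≤ n) :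
    ‖Rn κ t ε γ ((K + t) * (|K - t| + G) / (4 * π ^ 2)) n‖ ≤
      6 * exp 2 * ((n : ℝ) / ((K + t) * (|K - t| + G) / (4 * π ^ 2))) ^ (-γ / 2) := by
  have hG : 0 < G := by nlinarith
  have hGK : G ≤ K := by nlinarith
  have hP : |κ - t| ≤ |K - t| + G := by linarith [abs_sub_le κ K t]
  have hQ : |κ + t| ≤ K + t + G := by
    rw [abs_le] at hκ ⊢
    constructor <;> linarith
  have hkernel := norm_Rkernel_contour_le hε hγ hP hQ (by linarith [abs_nonneg (K - t)])
    (by linarith) (by linarith) hn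
  refine (norm_Rn_le_of_norm_Rkernel_le (by linarith) hkernel).trans ?_
  have hbound_nonneg : 0 ≤ 6 * exp 2 *
      ((n : ℝ) / ((K + t) * (|K - t| + G) / (4 * π ^ 2))) ^ (-γ / 2) := by
    have : 0 ≤ K + t := by linarith
    positivity
  rw [div_le_iff₀ pi_pos]
  nlinarith [two_le_pi]

lemma eventually_four_mul_log_pow_four_le_rpow {s : ℝ} (hs : 0 < s) :
    ∀ᶠ K : ℝ in Filter.atTop, 4 * (log K ^ 2) ^ 2 ≤ K ^ s := by
  have hO := (isLittleO_log_rpow_rpow_atTop 4 hs).bound (by norm_num : (0 : ℝ) < 1 / 4)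
  filter_upwards [Filter.eventually_ge_atTop 1, hO] with K hK hlog
  have : 0 ≤ log K := log_nonneg hK
  rw [norm_of_nonneg (by positivity), norm_of_nonneg (by positivity)] at hlog
  have hpow : log K ^ (4 : ℝ) = (log K ^ 2) ^ 2 := by
    rw [← pow_mul]
    exact_mod_cast rpow_natCast (log K) 4
  rw [hpow] at hlog
  linarith

lemma eventually_eight_le_log_sq : ∀ᶠ K : ℝ in Filter.atTop, 8 ≤ log K ^ 2 := by
  filter_upwards [tendsto_log_atTop.eventually_ge_atTop 3] with K hK
  nlinarith

theorem stmt_13_general :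
    ∃ C : ℝ, 0 < C ∧ ∀ ε₁ : ℝ, 0 < ε₁ → ∃ K₀ : ℝ, 0 < K₀ ∧
      ∀ K G t κ ε : ℝ, K₀ ≤ K → K ^ ε₁ ≤ G → G ≤ K ^ (1 - ε₁) →
        0 ≤ t → |κ - K| ≤ G → |ε| ≤ 2 →
        ∀ n : ℕ, 1 ≤ n →
          ‖Rn κ t ε ((Real.log K) ^ 2) ((K + t) * (|K - t| + G) / (4 * π ^ 2)) n‖ ≤
            C * ((n : ℝ) / ((K + t) * (|K - t| + G) / (4 * π ^ 2))) ^
              (-(Real.log K) ^ 2 / 2) := by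
  refine ⟨6 * exp 2, by positivity, fun ε₁ hε₁ ↦ ?_⟩
  obtain ⟨K₀, hK₀⟩ := Filter.eventually_atTop.1
    (eventually_eight_le_log_sq.and (eventually_four_mul_log_pow_four_le_rpow hε₁))
  refine ⟨max K₀ 1, by positivity, fun K G t κ ε hK hG hG' ht hκ hε n hn ↦ ?_⟩
  obtain ⟨hγ, hγK⟩ := hK₀ K ((le_max_left _ _).trans hK)
  have hK0 : 0 < K := by linarith [le_max_right K₀ 1]
  have hγG : 4 * log K ^ 2 * G ≤ K :=
    calc 4 * log K ^ 2 * G ≤ K ^ ε₁ * K ^ (1 - ε₁) := by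
          have : 4 * log K ^ 2 ≤ K ^ ε₁ := by nlinarith
          gcongr
          exact (rpow_nonneg hK0.le _).trans hG
      _ = K := by rw [← rpow_add hK0]; simp
  exact norm_Rn_le hε hγ (hγK.trans hG) hγG ht hκ hn

/-- The bound (3.47)–(3.48) in the proof of Lemma 9 of Jutila–Motohashi:
with `γ = (log K)²` and `T = (K+t)(|K−t|+G)/(4π²)`, one has
`|R(n)| ≤ C (n/T)^{−γ/2}` uniformly in the stated ranges. -/
theorem stmt_13 (ε₁ : ℝ) (hε₁ : 0 < ε₁) (hε₁' : ε₁ < 1 / 10) :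
    ∃ C K₀ : ℝ, 0 < C ∧ 0 < K₀ ∧
      ∀ K G t κ ε : ℝ, K₀ ≤ K → K ^ ε₁ ≤ G → G ≤ K ^ (1 - ε₁) →
        0 ≤ t → t ≤ K ^ (1 / ε₁) → |κ - K| ≤ G → (ε = 1 ∨ ε = -1) →
        ∀ n : ℕ, 1 ≤ n →
          ‖Rn κ t ε ((Real.log K) ^ 2) ((K + t) * (|K - t| + G) / (4 * π ^ 2)) n‖ ≤
            C * ((n : ℝ) / ((K + t) * (|K - t| + G) / (4 * π ^ 2))) ^
              (-(Real.log K) ^ 2 / 2) := by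
  obtain ⟨C, hC, h⟩ := stmt_13_general
  obtain ⟨K₀, hK₀, hbound⟩ := h ε₁ hε₁
  exact ⟨C, K₀, hC, hK₀, fun K G t κ ε hK hG hG' ht _ hκ hε ↦
    hbound K G t κ ε hK hG hG' ht hκ (by rcases hε with rfl | rfl <;> norm_num)⟩
end
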